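/- arXiv:2301.03542 — 2 statements merged into one kernel-verified Lean document; each statement's English description precedes it below -/
import Mathlib

section
/- Fix B > 1 and α ∈ (0,1], and let 𝒟_{Box,Lip,B} be the set of laws on ℝ^d whose densities are 1-Lipschitz, supported on [−1,1]^d, and take values in [1/B, B]. There exist an estimator sequence 𝓔 and constants C and k (depending only on d, B, and α) such that for every P ∈ 𝒟_{Box,Lip,B} that is not log-concave, writing ε = d_H(p, 𝓛) > 0, the ULR rejection time τ_α = inf{ t : R_t ≥ 1/α } satisfies E_{P^∞}[τ_α] ≤ C · ε^{−2(d+3)} · (1 + log(1/ε))^{k}. -/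
open MeasureTheory ProbabilityTheory Filter Finset Matrix
open scoped Classical

noncomputable section

namespace SeqTest

/-- `ℝ^d`. -/
abbrev RV (d : ℕ) := Fin d → ℝ

/-- The sequence space `Ω = (ℝ^d)^ℕ`. -/
abbrev Seq (d : ℕ) := ℕ → RV d

variable (d : ℕ)


/-- The first `t` coordinates of a sequence. -/
def prefixMap (t : ℕ) : Seq d → (Fin t → RV d) := fun ω s => ω s

/-- The law of the first `t` coordinates under a sequential law `μ`. -/
def prefixLaw (μ : Measure (Seq d)) (t : ℕ) : Measure (Fin t → RV d) :=
  μ.map (prefixMap d t)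

/-- The natural filtration of the coordinate process: `ℱ t = σ(X_0, …, X_{t-1})`. -/
def F : Filtration ℕ (inferInstance : MeasurableSpace (Seq d)) where
  seq t := ⨆ s ∈ Finset.range t, MeasurableSpace.comap (fun ω : Seq d => ω s) inferInstance
  mono' := by
    intro i j hij
    exact biSup_mono fun s hs => Finset.mem_range.mpr
      (lt_of_lt_of_le (Finset.mem_range.mp hs) hij)
  le' := by
    intro t
    refine iSup₂_le fun s _ => ?_
    exact measurable_iff_comap_le.mp (measurable_pi_apply s)

/-- Local absolute continuity of sequential laws: every prefix law of `μ` is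
absolutely continuous w.r.t. the corresponding prefix law of `Γ`. -/
def LocAC (μ Γ : Measure (Seq d)) : Prop := ∀ t, prefixLaw d μ t ≪ prefixLaw d Γ t

/-- The density (likelihood-ratio) process `Z_t^μ = d(μ|_t)/d(Γ|_t)` evaluated along the path. -/
def Z (μ Γ : Measure (Seq d)) (t : ℕ) (ω : Seq d) : ℝ :=
  ((prefixLaw d μ t).rnDeriv (prefixLaw d Γ t) (prefixMap d t ω)).toReal

/-- The standard Gaussian measure on `ℝ^d`. -/
def stdGaussian : Measure (RV d) := Measure.pi fun _ => gaussianReal 0 1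

/-- `Γ` is the law of an i.i.d. sequence of standard Gaussians: characterized through its
finite-dimensional rectangle probabilities. -/
def IsGamma (Γ : Measure (Seq d)) : Prop :=
  IsProbabilityMeasure Γ ∧
    ∀ (t : ℕ) (A : Fin t → Set (RV d)), (∀ s, MeasurableSet (A s)) →
      prefixLaw d Γ t (Set.univ.pi A) = ∏ s, stdGaussian d (A s)

/-- `M` is a nonnegative supermartingale for the sequential law `μ`
(w.r.t. the natural filtration). -/
def IsNSM (μ : Measure (Seq d)) (M : ℕ → Seq d → ℝ) : Prop :=
  (∀ t ω, 0 ≤ M t ω) ∧ Supermartingale M (F d) μ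

/-- `M` is a nonnegative martingale for the sequential law `μ`. -/
def IsNM (μ : Measure (Seq d)) (M : ℕ → Seq d → ℝ) : Prop :=
  (∀ t ω, 0 ≤ M t ω) ∧ Martingale M (F d) μ


/-- `R` is the `(s,h)`-fork-convex combination of `P` with `Q` (relative to the
reference law `Γ`), described through its density process. -/
def IsFCC (Γ P Q : Measure (Seq d)) (s : ℕ) (h : Seq d → ℝ) (R : Measure (Seq d)) : Prop :=
  IsProbabilityMeasure P ∧ IsProbabilityMeasure Q ∧ LocAC d P Γ ∧ LocAC d Q Γ ∧
  Measurable[F d s] h ∧ (∀ ω, h ω ∈ Set.Icc (0 : ℝ) 1) ∧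
  Γ {ω | h ω < 1 ∧ Z d Q Γ s ω = 0} = 0 ∧
  IsProbabilityMeasure R ∧ LocAC d R Γ ∧
  ∀ t : ℕ, (fun ω => Z d R Γ t ω) =ᵐ[Γ]
    (fun ω => if t ≤ s then Z d P Γ t ω
      else h ω * Z d P Γ t ω + (1 - h ω) * Z d Q Γ t ω * (Z d P Γ s ω / Z d Q Γ s ω))

/-- A set of sequential laws is fork-convex if it is closed under fork-convex combinations. -/
def IsForkConvex (Γ : Measure (Seq d)) (S : Set (Measure (Seq d))) : Prop :=
  ∀ P ∈ S, ∀ Q ∈ S, ∀ (s : ℕ) (h : Seq d → ℝ) (R : Measure (Seq d)),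
    IsFCC d Γ P Q s h R → R ∈ S

/-- The fork-convex hull: the smallest fork-convex set containing `𝔓`. -/
def fconv (Γ : Measure (Seq d)) (𝔓 : Set (Measure (Seq d))) : Set (Measure (Seq d)) :=
  ⋂₀ {S | 𝔓 ⊆ S ∧ IsForkConvex d Γ S}

/-- Convergence of sequential laws: the density processes converge in `L¹(Γ)` at every fixed time. -/
def TendstoLocL1 (Γ : Measure (Seq d)) (Pn : ℕ → Measure (Seq d)) (P : Measure (Seq d)) : Prop :=
  ∀ t, Tendsto (fun n => ∫ ω, |Z d (Pn n) Γ t ω - Z d P Γ t ω| ∂Γ) atTop (nhds 0)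

/-- The closed fork-convex hull: the closure of the fork-convex hull under local `L¹(Γ)`
convergence of density processes. -/
def clfconv (Γ : Measure (Seq d)) (𝔓 : Set (Measure (Seq d))) : Set (Measure (Seq d)) :=
  {P | IsProbabilityMeasure P ∧ LocAC d P Γ ∧
    ∃ Pn : ℕ → Measure (Seq d), (∀ n, Pn n ∈ fconv d Γ 𝔓) ∧ TendstoLocL1 d Γ Pn P}

/-- `μ` is the law of an i.i.d. sequence with marginal `P`. -/
def IsIIDLaw (μ : Measure (Seq d)) (P : Measure (RV d)) : Prop :=
  IsProbabilityMeasure μ ∧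
    ∀ (t : ℕ) (A : Fin t → Set (RV d)), (∀ s, MeasurableSet (A s)) →
      prefixLaw d μ t (Set.univ.pi A) = ∏ s, P (A s)

/-- `μ` is the law of an independent sequence with marginals `Ps 0, Ps 1, …`. -/
def IsProductLaw (μ : Measure (Seq d)) (Ps : ℕ → Measure (RV d)) : Prop :=
  IsProbabilityMeasure μ ∧
    ∀ (t : ℕ) (A : Fin t → Set (RV d)), (∀ s, MeasurableSet (A s)) →
      prefixLaw d μ t (Set.univ.pi A) = ∏ s : Fin t, Ps s (A s)

/-- The set of i.i.d. sequential laws with marginals in `PP`. -/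
def iidLaws (PP : Set (Measure (RV d))) : Set (Measure (Seq d)) :=
  {μ | ∃ P ∈ PP, IsIIDLaw d μ P}

/-- The set of independent-product sequential laws with all marginals in `PP`. -/
def productLaws (PP : Set (Measure (RV d))) : Set (Measure (Seq d)) :=
  {μ | ∃ Ps : ℕ → Measure (RV d), (∀ t, Ps t ∈ PP) ∧ IsProductLaw d μ Ps}




/-- The density of the `d`-dimensional Gaussian with mean `m` and covariance matrix `S`. -/
def gaussDensityFn (m : RV d) (S : Matrix (Fin d) (Fin d) ℝ) (x : RV d) : ℝ :=
  (2 * Real.pi) ^ (-(d : ℝ) / 2) * S.det ^ (-(1 : ℝ) / 2) *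
    Real.exp (-(1 / 2) * ((x - m) ⬝ᵥ (S⁻¹ *ᵥ (x - m))))

/-- A finite mixture of nondegenerate Gaussian densities. -/
def IsGaussianMixture (g : RV d → ℝ) : Prop :=
  ∃ (k : ℕ) (α : Fin k → ℝ) (ms : Fin k → RV d) (Ss : Fin k → Matrix (Fin d) (Fin d) ℝ),
    (∀ i, 0 ≤ α i) ∧ (∑ i, α i = 1) ∧ (∀ i, (Ss i).PosDef) ∧
    g = fun x => ∑ i, α i * gaussDensityFn d (ms i) (Ss i) x

/-- A log-concave nonnegative function on `ℝ^d`. -/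
def IsLogConcaveFn (p : RV d → ℝ) : Prop :=
  (∀ x, 0 ≤ p x) ∧
    ∀ (x y : RV d) (l : ℝ), 0 ≤ l → l ≤ 1 →
      p x ^ l * p y ^ (1 - l) ≤ p (l • x + (1 - l) • y)

/-- A log-concave probability density on `ℝ^d`. -/
def IsLogConcaveDensity (p : RV d → ℝ) : Prop :=
  Measurable p ∧ IsLogConcaveFn d p ∧ ∫ x, p x = 1

/-- The set `𝓛` of laws on `ℝ^d` with a log-concave Lebesgue density. -/
def logConcaveLaws : Set (Measure (RV d)) :=
  {P | IsProbabilityMeasure P ∧ ∃ p : RV d → ℝ, Measurable p ∧ IsLogConcaveFn d p ∧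
    P = volume.withDensity fun x => ENNReal.ofReal (p x)}

/-- The set `𝒢` of nondegenerate Gaussian laws on `ℝ^d`. -/
def gaussianLaws : Set (Measure (RV d)) :=
  {P | ∃ (m : RV d) (S : Matrix (Fin d) (Fin d) ℝ), S.PosDef ∧
    P = volume.withDensity fun x => ENNReal.ofReal (gaussDensityFn d m S x)}

/-- An estimator sequence: a measurable family of (strictly positive) predictable
probability density estimates. -/
def IsEstimatorSeq (E : (t : ℕ) → (Fin t → RV d) → RV d → ℝ) : Prop :=
  (∀ t, Measurable fun q : (Fin t → RV d) × RV d => E t q.1 q.2) ∧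
  (∀ t h x, 0 < E t h x) ∧ (∀ t h, ∫ x, E t h x = 1)

/-- The universal likelihood ratio (ULR) process. Time `t` corresponds to having observed
the `t` samples `ω 0, …, ω (t-1)`. -/
def ULR (E : (t : ℕ) → (Fin t → RV d) → RV d → ℝ) (t : ℕ) (ω : Seq d) : ℝ :=
  if t ≤ d then 1 else
    (∏ j ∈ Finset.Ico d t, E j (fun i : Fin j => ω i) (ω j)) /
      ⨆ p : {p : RV d → ℝ // IsLogConcaveDensity d p}, ∏ j ∈ Finset.Ico d t, p.1 (ω j)

/-- The prediction (cumulative log-loss) regret of the estimator sequence `E` relative to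
the density of `P`. -/
def regret (P : Measure (RV d)) (E : (t : ℕ) → (Fin t → RV d) → RV d → ℝ)
    (t : ℕ) (ω : Seq d) : ℝ :=
  ∑ j ∈ Finset.range t,
    (Real.log ((P.rnDeriv volume (ω j)).toReal) - Real.log (E j (fun i : Fin j => ω i) (ω j)))

/-- The Hellinger distance between two laws on `ℝ^d` (via their Lebesgue densities). -/
def hellinger (P Q : Measure (RV d)) : ℝ :=
  Real.sqrt ((1 / 2) *
    ∫ x, (Real.sqrt ((P.rnDeriv volume x).toReal) - Real.sqrt ((Q.rnDeriv volume x).toReal)) ^ 2)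

/-- The Hellinger distance from `P` to the class of log-concave laws. -/
def dHLC (P : Measure (RV d)) : ℝ :=
  sInf {r | ∃ L ∈ logConcaveLaws d, r = hellinger d P L}

/-- The Kullback–Leibler divergence. -/
def klDivR {α : Type*} [MeasurableSpace α] (P Q : Measure α) : EReal :=
  if P ≪ Q ∧ Integrable (fun x => Real.log ((P.rnDeriv Q x).toReal)) P
  then ((∫ x, Real.log ((P.rnDeriv Q x).toReal) ∂P : ℝ) : EReal) else ⊤

/-- Membership in `𝒟₁`. -/
def MemD1 (P : Measure (RV d)) : Prop :=
  IsProbabilityMeasure P ∧ P ≪ volume ∧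
  Integrable (fun x => max 0 (Real.log ((P.rnDeriv volume x).toReal))) P ∧
  Integrable (fun x => Real.sqrt (∑ i, (x i) ^ 2)) P

/-- The log-likelihood gap `σ_t(P)` between the true density and the log-concave maximum
likelihood. -/
def sigmaT (P : Measure (RV d)) (t : ℕ) (ω : Seq d) : ℝ :=
  (∑ j ∈ Finset.range t, Real.log ((P.rnDeriv volume (ω j)).toReal)) -
    ⨆ p : {p : RV d → ℝ // IsLogConcaveDensity d p},
      ∑ j ∈ Finset.range t, Real.log (p.1 (ω j))

/-- The mean vector of `P`. -/
def meanVec (P : Measure (RV d)) : RV d := fun i => ∫ x, x i ∂P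

/-- `Δ_P = min_{‖v‖=1} E_P |⟨v, X − E_P X⟩|`. -/
def DeltaP (P : Measure (RV d)) : ℝ :=
  sInf {r | ∃ v : RV d, (∑ i, (v i) ^ 2) = 1 ∧
    r = ∫ x, |∑ i, v i * (x i - meanVec d P i)| ∂P}

/-- The class `𝒟_{Box,Lip,B}`: laws with a `1`-Lipschitz density supported on `[-1,1]^d`
taking values in `[1/B, B]` there. -/
def DBoxLip (B : ℝ) : Set (Measure (RV d)) :=
  {P | IsProbabilityMeasure P ∧ ∃ p : RV d → ℝ, Measurable p ∧
    P = volume.withDensity (fun x => ENNReal.ofReal (p x)) ∧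
    (∀ x, ¬ (∀ i, |x i| ≤ 1) → p x = 0) ∧
    (∀ x, (∀ i, |x i| ≤ 1) → 1 / B ≤ p x ∧ p x ≤ B) ∧
    (∀ x y, (∀ i, |x i| ≤ 1) → (∀ i, |y i| ≤ 1) →
      |p x - p y| ≤ Real.sqrt (∑ i, (x i - y i) ^ 2))}

/-!
Let `ε` be the Hellinger distance from `p` to the log-concave densities. Two facts make the ratio
large.

*The denominator is small.* A log-concave density with a very large value decays so fast that it
loses on a sample visiting every corner of the box. The other log-concave densities have square
roots which are bounded and quasiconcave. A convex set crosses only `O(n ^ (d - 1))` of the `n ^ d`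
cells of a grid: a cell containing a point outside the set is the apex cell of an orthant missing
the set, and for a fixed type of orthant such cells form an antichain for the strict product order.
Hence each of these square roots lies below one of at most `exp (n ^ (d + 1))` step functions, with
loss of affinity `O(1 / n)`. A Chernoff bound for the affinity and a union bound with `n ≈ ε⁻²` show
that all log-concave likelihoods are at most `exp (-ε² t / 2)` times that of `p`.

*The numerator is large.* The Bayesian mixture of all quantized densities, over all grid sizes, pays
`O(n ^ (d + 1))` for its prior and `O(1 / n)` per observation for the quantization, again with
`n ≈ ε⁻²`.

Both costs are overcome once `ε² t` exceeds a multiple of `ε ^ (-2 (d + 1))`, after which the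
probability of not having rejected decays like `exp (-κ ε² t)`.
-/

section

variable {d}

/-- The closed orthant with apex `z` whose directions are selected by `s`. -/
def orthant (s : Fin d → Bool) (z : RV d) : Set (RV d) :=
  {a | ∀ i, if s i then z i ≤ a i else a i ≤ z i}

theorem mem_of_forall_inter_orthant_nonempty {A : Set (RV d)} (hA : Convex ℝ A) {z : RV d}
    (h : ∀ s, (A ∩ orthant s z).Nonempty) : z ∈ A := by
  choose a ha using h
  suffices hz : z ∈ convexHull ℝ (Set.range a) from
    convexHull_min (Set.range_subset_iff.2 fun s => (ha s).1) hA hz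
  by_contra hz
  have hclosed : IsClosed (convexHull ℝ (Set.range a)) :=
    ((Set.finite_range a).isCompact_convexHull ℝ).isClosed
  obtain ⟨f, u, hfz, hfu⟩ :=
    geometric_hahn_banach_point_closed (convex_convexHull ℝ _) hclosed hz
  have hf : ∀ y : RV d, f y = ∑ i, y i * f (Pi.single i 1) := fun y => by
    conv_lhs => rw [pi_eq_sum_univ' y]
    simp [Pi.single]
  -- The orthant on which `f ≤ f z` contains some `a s`, against the strict separation.
  let s : Fin d → Bool := fun i => decide (f (Pi.single i 1) ≤ 0)
  have hle : f (a s) ≤ f z := by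
    rw [hf, hf]
    refine Finset.sum_le_sum fun i _ => ?_
    have hi := (ha s).2 i
    by_cases hfi : f (Pi.single i 1) ≤ 0
    · rw [if_pos (decide_eq_true hfi)] at hi
      exact mul_le_mul_of_nonpos_right hi hfi
    · rw [if_neg (by simpa [s] using hfi)] at hi
      exact mul_le_mul_of_nonneg_right hi (not_le.1 hfi).le
  exact (hfu (a s) (subset_convexHull ℝ _ ⟨s, rfl⟩)).not_ge (hle.trans hfz.le)

/-- The cube `[-1, 1]^d`. -/
def box (d : ℕ) : Set (RV d) := Set.Icc (-1) 1

theorem mem_box {x : RV d} : x ∈ box d ↔ ∀ i, |x i| ≤ 1 := by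
  simp [box, Pi.le_def, abs_le, forall_and]

theorem measurableSet_box : MeasurableSet (box d) := measurableSet_Icc

/-- The index of the cell containing a given point in the grid that cuts the cube into `n ^ d`
cells of side `2 / n`; points outside the cube are sent to nearby cells by clamping. -/
def cell (n : ℕ) [NeZero n] (x : RV d) : Fin d → Fin n :=
  fun i => ⟨min ⌊(x i + 1) / 2 * n⌋₊ (n - 1), by have := NeZero.pos n; omega⟩

section Grid

variable {n : ℕ} [NeZero n]

theorem lt_of_cell_lt {x y : RV d} {i : Fin d} (h : cell n x i < cell n y i) : x i < y i := by
  by_contra! hle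
  have hfloor : ⌊(y i + 1) / 2 * (n : ℝ)⌋₊ ≤ ⌊(x i + 1) / 2 * (n : ℝ)⌋₊ := by gcongr
  simp only [cell, Fin.lt_def] at h
  omega

theorem cell_le_and_le_cell_add_one {x : RV d} (hx : x ∈ box d) (i : Fin d) :
    (cell n x i : ℝ) ≤ (x i + 1) / 2 * n ∧ (x i + 1) / 2 * n ≤ cell n x i + 1 := by
  have hxi := abs_le.1 (mem_box.1 hx i)
  have hn : (0 : ℝ) < n := by exact_mod_cast NeZero.pos n
  have h0 : 0 ≤ (x i + 1) / 2 * n := mul_nonneg (by linarith) hn.le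
  have hn1 : ((n - 1 : ℕ) : ℝ) + 1 = n := by
    exact_mod_cast Nat.sub_add_cancel (NeZero.one_le (n := n))
  simp only [cell]
  rcases le_total ⌊(x i + 1) / 2 * (n : ℝ)⌋₊ (n - 1) with hle | hle
  · rw [min_eq_left hle]
    exact ⟨Nat.floor_le h0, (Nat.lt_floor_add_one _).le⟩
  · rw [min_eq_right hle, hn1]
    exact ⟨(Nat.cast_le.2 hle).trans (Nat.floor_le h0), by nlinarith⟩

theorem mem_Icc_of_mem_box {x : RV d} (hx : x ∈ box d) :
    x ∈ Set.Icc (fun i => 2 / n * (cell n x i : ℝ) - 1)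
      (fun i => 2 / n * ((cell n x i : ℝ) + 1) - 1) := by
  have hn : (0 : ℝ) < n := by exact_mod_cast NeZero.pos n
  refine ⟨fun i => ?_, fun i => ?_⟩
  · have := (cell_le_and_le_cell_add_one (n := n) hx i).1
    rw [sub_le_iff_le_add, div_mul_eq_mul_div, div_le_iff₀ hn]
    linarith
  · have := (cell_le_and_le_cell_add_one (n := n) hx i).2
    rw [le_sub_iff_add_le, div_mul_eq_mul_div, le_div_iff₀ hn]
    linarith

/-- The lower corner of the grid cell `c`, the point at which densities are quantized. -/
def cellCorner (n : ℕ) (c : Fin d → Fin n) : RV d := fun i => 2 / n * (c i : ℝ) - 1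

theorem cellCorner_mem_box (c : Fin d → Fin n) : cellCorner n c ∈ box d := by
  have hn : (0 : ℝ) < n := by exact_mod_cast NeZero.pos n
  refine mem_box.2 fun i => ?_
  have hc : (c i : ℝ) ≤ n := by exact_mod_cast (c i).is_lt.le
  have h0 : 0 ≤ 2 / n * (c i : ℝ) := by positivity
  have h2 : 2 / n * (c i : ℝ) ≤ 2 := by
    rw [div_mul_eq_mul_div, div_le_iff₀ hn]
    gcongr
  rw [abs_le, cellCorner]
  constructor <;> linarith

theorem abs_sub_cellCorner_le {x : RV d} (hx : x ∈ box d) (i : Fin d) :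
    |x i - cellCorner n (cell n x) i| ≤ 2 / n := by
  have hlower := (mem_Icc_of_mem_box (n := n) hx).1 i
  have hupper := (mem_Icc_of_mem_box (n := n) hx).2 i
  rw [cellCorner, abs_of_nonneg (sub_nonneg.2 hlower)]
  linarith

theorem measurable_cell : Measurable (cell n : RV d → Fin d → Fin n) := by
  refine measurable_pi_lambda _ fun i => ?_
  have hfloor : Measurable fun x : RV d => ⌊(x i + 1) / 2 * (n : ℝ)⌋₊ :=
    Nat.measurable_floor.comp (by fun_prop)
  exact (measurable_from_top (f := fun k : ℕ => (⟨min k (n - 1), by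
    have := NeZero.pos n; omega⟩ : Fin n))).comp hfloor

theorem volume_box_inter_cell_le (c : Fin d → Fin n) :
    volume (box d ∩ cell n ⁻¹' {c}) ≤ ENNReal.ofReal ((2 / n) ^ d) := by
  calc volume (box d ∩ cell n ⁻¹' {c})
      ≤ volume (Set.Icc (fun i => 2 / n * (c i : ℝ) - 1)
          (fun i => 2 / n * ((c i : ℝ) + 1) - 1)) := by
        refine measure_mono ?_
        rintro x ⟨hx, rfl⟩
        exact mem_Icc_of_mem_box hx
    _ = ENNReal.ofReal ((2 / n) ^ d) := by
        rw [Real.volume_Icc_pi, ENNReal.ofReal_pow (by positivity)]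
        simp [mul_add]

theorem setLIntegral_box_cell_le {e : (Fin d → Fin n) → ℝ} (he : ∀ c, 0 ≤ e c) :
    ∫⁻ x in box d, ENNReal.ofReal (e (cell n x)) ≤ ENNReal.ofReal ((2 / n) ^ d * ∑ c, e c) := by
  rw [← lintegral_map (μ := volume.restrict (box d)) (f := fun c => ENNReal.ofReal (e c))
    (measurable_of_countable _) measurable_cell, lintegral_fintype, Finset.mul_sum,
    ENNReal.ofReal_sum_of_nonneg fun c _ => mul_nonneg (by positivity) (he c)]
  refine Finset.sum_le_sum fun c _ => ?_
  have hc := measurable_cell (measurableSet_singleton c)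
  rw [mul_comm, ENNReal.ofReal_mul (by positivity),
    Measure.map_apply measurable_cell (measurableSet_singleton c), Measure.restrict_apply hc,
    Set.inter_comm]
  gcongr
  exact volume_box_inter_cell_le c

end Grid

theorem card_mul_le_of_forall_not_strongLT {ι : Type*} [Fintype ι] {n : ℕ}
    {D : Finset (ι → Fin n)} (hD : ∀ c ∈ D, ∀ c' ∈ D, ¬ StrongLT c c') :
    D.card * n ≤ (2 * n) ^ Fintype.card ι := by
  -- Distinct diagonal translates of `D` are disjoint.
  let shift : (ι → Fin n) × Fin n → ι → Fin (2 * n) := fun q i => ⟨q.1 i + q.2, by omega⟩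
  have hshift : ∀ {q q'}, shift q = shift q' → ∀ i, (q.1 i + q.2 : ℕ) = q'.1 i + q'.2 :=
    fun h i => congrArg Fin.val (congrFun h i)
  have hle : ∀ c ∈ D, ∀ c' ∈ D, ∀ k k', shift (c, k) = shift (c', k') → k ≤ k' := by
    intro c hc c' hc' k k' h
    by_contra! hlt
    refine hD c hc c' hc' fun i => ?_
    have hi : (c i + k : ℕ) = c' i + k' := hshift h i
    rw [Fin.lt_def] at hlt ⊢
    omega
  have hinj : Set.InjOn shift (D ×ˢ (Finset.univ : Finset (Fin n)) : Finset _) := by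
    rintro ⟨c, k⟩ hq ⟨c', k'⟩ hq' h
    have hc : c ∈ D := (Finset.mem_product.1 hq).1
    have hc' : c' ∈ D := (Finset.mem_product.1 hq').1
    obtain rfl : k = k' := (hle c hc c' hc' k k' h).antisymm (hle c' hc' c hc k' k h.symm)
    exact Prod.ext (funext fun i => Fin.ext (Nat.add_right_cancel (hshift h i))) rfl
  simpa [Finset.card_product] using
    Finset.card_le_card_of_injOn (t := Finset.univ) shift (fun _ _ => Finset.mem_univ _) hinj

section BoundaryCells

variable {n : ℕ} [NeZero n]

/-- The cells met by both a set and its complement. -/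
def boundaryCells (n : ℕ) [NeZero n] (A : Set (RV d)) : Finset (Fin d → Fin n) :=
  {c | c ∈ cell n '' A ∧ c ∈ cell n '' Aᶜ}

/-- The cells that meet `A` and contain the apex of an orthant of type `s` avoiding `A`. -/
def exposedCells (n : ℕ) [NeZero n] (A : Set (RV d)) (s : Fin d → Bool) :
    Finset (Fin d → Fin n) :=
  {c | c ∈ cell n '' A ∧ ∃ z, cell n z = c ∧ ¬ (A ∩ orthant s z).Nonempty}

theorem boundaryCells_subset_biUnion_exposedCells {A : Set (RV d)} (hA : Convex ℝ A) :
    boundaryCells n A ⊆ Finset.univ.biUnion (exposedCells n A) := by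
  intro c hc
  simp only [boundaryCells, Finset.mem_filter, Finset.mem_univ, true_and] at hc
  obtain ⟨hcA, z, hz, hzc⟩ := hc
  obtain ⟨s, hs⟩ := not_forall.1 (mt (mem_of_forall_inter_orthant_nonempty hA) hz)
  simp only [exposedCells, Finset.mem_biUnion, Finset.mem_filter, Finset.mem_univ, true_and]
  exact ⟨s, hcA, z, hzc, hs⟩

theorem card_exposedCells_mul_le (A : Set (RV d)) (s : Fin d → Bool) :
    (exposedCells n A s).card * n ≤ (2 * n) ^ d := by
  let reflect : (Fin d → Fin n) → Fin d → Fin n := fun c i => if s i then c i else (c i).rev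
  have hreflect : Function.Injective reflect := fun c c' h => funext fun i => by
    have hi := congrFun h i
    by_cases hs : s i <;> simpa [reflect, hs] using hi
  have horthant : ∀ z a : RV d, StrongLT (reflect (cell n z)) (reflect (cell n a)) →
      a ∈ orthant s z := fun z a h i => by
    have hi := h i
    by_cases hs : s i
    · simp only [reflect, hs, if_true] at hi ⊢
      exact (lt_of_cell_lt hi).le
    · simp only [reflect, hs, Bool.false_eq_true, if_false, Fin.rev_lt_rev] at hi ⊢
      exact (lt_of_cell_lt hi).le
  rw [← Finset.card_image_of_injective _ hreflect]
  simpa using card_mul_le_of_forall_not_strongLT (D := (exposedCells n A s).image reflect) <| by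
    simp only [exposedCells, Finset.mem_image, Finset.mem_filter, Finset.mem_univ, true_and]
    rintro _ ⟨_, ⟨-, z, rfl, hz⟩, rfl⟩ _ ⟨_, ⟨⟨a, ha, rfl⟩, -⟩, rfl⟩ h
    exact hz ⟨a, ha, horthant z a h⟩

theorem card_boundaryCells_mul_le {A : Set (RV d)} (hA : Convex ℝ A) :
    (boundaryCells n A).card * n ≤ 4 ^ d * n ^ d := by
  calc (boundaryCells n A).card * n
      ≤ (∑ s, (exposedCells n A s).card) * n := by
        gcongr
        exact (Finset.card_le_card (boundaryCells_subset_biUnion_exposedCells hA)).trans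
          Finset.card_biUnion_le
    _ = ∑ s, (exposedCells n A s).card * n := Finset.sum_mul _ _ _
    _ ≤ ∑ _s : Fin d → Bool, (2 * n) ^ d :=
        Finset.sum_le_sum fun s _ => card_exposedCells_mul_le A s
    _ = 4 ^ d * n ^ d := by
        rw [Finset.sum_const, Finset.card_univ, Fintype.card_pi, smul_eq_mul]
        simp only [Fintype.card_bool, Finset.prod_const, Finset.card_univ, Fintype.card_fin]
        rw [← mul_pow, ← mul_pow]
        ring

end BoundaryCells

section StepFunctions

variable {n : ℕ} [NeZero n] {g : RV d → ℝ} {η : ℝ}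

/-- The superlevel set of `g` at height `(k + 1) * η`. -/
def levelSet (η : ℝ) (g : RV d → ℝ) (k : ℕ) : Set (RV d) := {x | (k + 1) * η ≤ g x}

theorem mem_levelSet_iff_lt_floor (hη : 0 < η) {x : RV d} {k : ℕ} :
    x ∈ levelSet η g k ↔ k < ⌊g x / η⌋₊ := by
  rw [← Nat.succ_le_iff, Nat.le_floor_iff' (Nat.succ_ne_zero k), le_div_iff₀ hη, Nat.cast_succ]
  rfl

/-- The number of the first `n` level sets of `g` that meet a given cell. -/
def levelCount (n : ℕ) [NeZero n] (η : ℝ) (g : RV d → ℝ) (c : Fin d → Fin n) : Fin (n + 1) :=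
  ⟨#{k ∈ Finset.range n | c ∈ cell n '' levelSet η g k}, Nat.lt_succ_of_le <| by
    simpa using Finset.card_filter_le (Finset.range n) _⟩

/-- The number of the first `n` level sets of `g` whose boundary crosses a given cell. -/
def boundaryCount (n : ℕ) [NeZero n] (η : ℝ) (g : RV d → ℝ) (c : Fin d → Fin n) : ℕ :=
  #{k ∈ Finset.range n | c ∈ boundaryCells n (levelSet η g k)}

theorem sum_boundaryCount_le (hg : ∀ s, Convex ℝ {x | s ≤ g x}) :
    ∑ c, boundaryCount n η g c ≤ 4 ^ d * n ^ d := by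
  have hswap : ∑ c, boundaryCount n η g c =
      ∑ k ∈ Finset.range n, (boundaryCells n (levelSet η g k)).card := by
    simp only [boundaryCount, Finset.card_filter]
    rw [Finset.sum_comm]
    simp
  refine Nat.le_of_mul_le_mul_right (c := n) ?_ (NeZero.pos n)
  rw [hswap, Finset.sum_mul]
  refine (Finset.sum_le_sum fun k _ => card_boundaryCells_mul_le (hg _)).trans_eq ?_
  rw [Finset.sum_const, Finset.card_range, smul_eq_mul, mul_comm]

/-- The step function with value `η * (U c + 1)` on the cell `c`. -/
def stepFn (η : ℝ) (U : (Fin d → Fin n) → Fin (n + 1)) (x : RV d) : ℝ := η * (U (cell n x) + 1)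

theorem stepFn_pos (hη : 0 < η) (U : (Fin d → Fin n) → Fin (n + 1)) (x : RV d) :
    0 < stepFn η U x := by
  unfold stepFn
  positivity

@[fun_prop]
theorem measurable_stepFn (U : (Fin d → Fin n) → Fin (n + 1)) : Measurable (stepFn η U) :=
  (measurable_of_countable fun c => η * ((U c : ℝ) + 1)).comp measurable_cell

theorem le_stepFn_levelCount (hη : 0 < η) {x : RV d} (hxn : g x ≤ n * η) :
    g x ≤ stepFn η (levelCount n η g) x := by
  have hle : ⌊g x / η⌋₊ ≤ n := Nat.floor_le_of_le ((div_le_iff₀ hη).2 hxn)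
  have hcount : ⌊g x / η⌋₊ ≤ levelCount n η g (cell n x) := by
    have hsub : Finset.range ⌊g x / η⌋₊ ⊆
        {k ∈ Finset.range n | cell n x ∈ cell n '' levelSet η g k} := fun k hk => by
      rw [Finset.mem_range] at hk
      exact Finset.mem_filter.2 ⟨Finset.mem_range.2 (hk.trans_le hle), x,
        (mem_levelSet_iff_lt_floor hη).2 hk, rfl⟩
    exact (Finset.card_range _).ge.trans (Finset.card_le_card hsub)
  calc g x ≤ η * (⌊g x / η⌋₊ + 1) := by
        rw [← div_le_iff₀' hη]
        exact (Nat.lt_floor_add_one _).le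
    _ ≤ stepFn η (levelCount n η g) x := by
        unfold stepFn
        gcongr

theorem stepFn_levelCount_le (hη : 0 < η) {x : RV d} (hx0 : 0 ≤ g x) :
    stepFn η (levelCount n η g) x ≤ g x + η * (1 + boundaryCount n η g (cell n x)) := by
  have hcount : (levelCount n η g (cell n x) : ℕ) ≤
      ⌊g x / η⌋₊ + boundaryCount n η g (cell n x) := by
    have hsub : {k ∈ Finset.range n | cell n x ∈ cell n '' levelSet η g k} ⊆
        Finset.range ⌊g x / η⌋₊ ∪
          {k ∈ Finset.range n | cell n x ∈ boundaryCells n (levelSet η g k)} := fun k hk => by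
      obtain ⟨hkn, hk⟩ := Finset.mem_filter.1 hk
      by_cases hxk : x ∈ levelSet η g k
      · exact Finset.mem_union_left _ (Finset.mem_range.2 ((mem_levelSet_iff_lt_floor hη).1 hxk))
      · refine Finset.mem_union_right _ (Finset.mem_filter.2 ⟨hkn, ?_⟩)
        exact Finset.mem_filter.2 ⟨Finset.mem_univ _, hk, x, hxk, rfl⟩
    exact ((Finset.card_le_card hsub).trans (Finset.card_union_le _ _)).trans_eq
      (congrArg (· + _) (Finset.card_range _))
  have hcount' : (levelCount n η g (cell n x) : ℝ) ≤
      ⌊g x / η⌋₊ + boundaryCount n η g (cell n x) := by exact_mod_cast hcount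
  calc stepFn η (levelCount n η g) x
      ≤ η * (⌊g x / η⌋₊ + boundaryCount n η g (cell n x) + 1) := by
        unfold stepFn
        gcongr
    _ = η * ⌊g x / η⌋₊ + η * (1 + boundaryCount n η g (cell n x)) := by ring
    _ ≤ g x + η * (1 + boundaryCount n η g (cell n x)) := by
        gcongr
        rw [← le_div_iff₀' hη]
        exact Nat.floor_le (div_nonneg hx0 hη.le)

theorem setLIntegral_box_boundaryCount_le (hg : ∀ s, Convex ℝ {x | s ≤ g x}) (hη : 0 < η) :
    ∫⁻ x in box d, ENNReal.ofReal (η * (1 + boundaryCount n η g (cell n x))) ≤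
      ENNReal.ofReal (2 ^ d * (1 + 4 ^ d) * η) := by
  have hn : (0 : ℝ) < n := by exact_mod_cast NeZero.pos n
  have hsum : ∑ c, (boundaryCount n η g c : ℝ) ≤ 4 ^ d * n ^ d := by
    exact_mod_cast sum_boundaryCount_le hg
  refine (setLIntegral_box_cell_le (e := fun c => η * (1 + boundaryCount n η g c))
    fun c => by positivity).trans (ENNReal.ofReal_le_ofReal ?_)
  rw [← Finset.mul_sum, Finset.sum_add_distrib]
  calc (2 / (n : ℝ)) ^ d * (η * (∑ _c : Fin d → Fin n, 1 + ∑ c, (boundaryCount n η g c : ℝ)))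
      ≤ (2 / (n : ℝ)) ^ d * (η * (n ^ d + 4 ^ d * n ^ d)) := by
        gcongr
        simp
    _ = 2 ^ d * (1 + 4 ^ d) * η := by
        rw [div_pow]
        field_simp

theorem lintegral_sqrt_mul_stepFn_levelCount_le {p : RV d → ℝ} {B : ℝ} (hg0 : ∀ x, 0 ≤ g x)
    (hgm : Measurable g) (hg : ∀ s, Convex ℝ {x | s ≤ g x}) (hη : 0 < η) (hpm : Measurable p)
    (hp0 : ∀ x ∉ box d, p x = 0) (hpB : ∀ x ∈ box d, p x ≤ B) :
    ∫⁻ x, ENNReal.ofReal (√(p x) * stepFn η (levelCount n η g) x) ≤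
      (∫⁻ x, ENNReal.ofReal (√(p x) * g x)) +
        ENNReal.ofReal (√B * (2 ^ d * (1 + 4 ^ d) * η)) := by
  let e : RV d → ℝ := fun x => η * (1 + boundaryCount n η g (cell n x))
  have he : ∀ x, 0 ≤ e x := fun x => by positivity
  have hpoint : ∀ x, ENNReal.ofReal (√(p x) * stepFn η (levelCount n η g) x) ≤
      ENNReal.ofReal (√(p x) * g x) +
        (box d).indicator (fun x => ENNReal.ofReal √B * ENNReal.ofReal (e x)) x := by
    intro x
    by_cases hx : x ∈ box d
    · rw [Set.indicator_of_mem hx, ← ENNReal.ofReal_mul (Real.sqrt_nonneg _),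
        ← ENNReal.ofReal_add (mul_nonneg (Real.sqrt_nonneg _) (hg0 x))
          (mul_nonneg (Real.sqrt_nonneg _) (he x))]
      refine ENNReal.ofReal_le_ofReal ?_
      calc √(p x) * stepFn η (levelCount n η g) x
          ≤ √(p x) * (g x + e x) := by
            gcongr
            exact stepFn_levelCount_le hη (hg0 x)
        _ = √(p x) * g x + √(p x) * e x := mul_add _ _ _
        _ ≤ √(p x) * g x + √B * e x := by
            gcongr
            exact hpB x hx
    · simp [hp0 x hx]
  refine (lintegral_mono hpoint).trans ?_
  rw [lintegral_add_left (by fun_prop), lintegral_indicator measurableSet_box,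
    lintegral_const_mul' _ _ ENNReal.ofReal_ne_top, ENNReal.ofReal_mul (Real.sqrt_nonneg _)]
  gcongr
  exact setLIntegral_box_boundaryCount_le hg hη

end StepFunctions

/-- A probability density on `ℝ^d`. -/
structure IsDensity (p : RV d → ℝ) : Prop where
  measurable : Measurable p
  nonneg : ∀ x, 0 ≤ p x
  integral_eq_one : ∫ x, p x = 1

/-- The law on `ℝ^d` with Lebesgue density `p`. -/
def densityLaw (p : RV d → ℝ) : Measure (RV d) :=
  volume.withDensity fun x => ENNReal.ofReal (p x)

namespace IsDensity

variable {p q : RV d → ℝ}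

theorem integrable (hp : IsDensity p) : Integrable p :=
  Integrable.of_integral_ne_zero (by simp [hp.integral_eq_one])

theorem lintegral_eq_one (hp : IsDensity p) : ∫⁻ x, ENNReal.ofReal (p x) = 1 := by
  rw [← ofReal_integral_eq_lintegral_ofReal hp.integrable (.of_forall hp.nonneg),
    hp.integral_eq_one, ENNReal.ofReal_one]

theorem isProbabilityMeasure_densityLaw (hp : IsDensity p) :
    IsProbabilityMeasure (densityLaw p) :=
  ⟨by simpa [densityLaw] using hp.lintegral_eq_one⟩

theorem of_isProbabilityMeasure (hpm : Measurable p) (hp0 : ∀ x, 0 ≤ p x)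
    (h : IsProbabilityMeasure (densityLaw p)) : IsDensity p where
  measurable := hpm
  nonneg := hp0
  integral_eq_one := by
    rw [integral_eq_lintegral_of_nonneg_ae (.of_forall hp0) hpm.aestronglyMeasurable]
    simpa [densityLaw] using congrArg ENNReal.toReal h.measure_univ

theorem convexCombo (hp : IsDensity p) (hq : IsDensity q) {a b : ℝ} (ha : 0 ≤ a) (hb : 0 ≤ b)
    (hab : a + b = 1) : IsDensity fun x => a * p x + b * q x where
  measurable := (hp.measurable.const_mul a).add (hq.measurable.const_mul b)
  nonneg x := add_nonneg (mul_nonneg ha (hp.nonneg x)) (mul_nonneg hb (hq.nonneg x))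
  integral_eq_one := by
    rw [integral_add (hp.integrable.const_mul a) (hq.integrable.const_mul b),
      integral_const_mul, integral_const_mul, hp.integral_eq_one, hq.integral_eq_one,
      mul_one, mul_one, hab]

theorem integrable_sqrt_mul_sqrt (hp : IsDensity p) (hq : IsDensity q) :
    Integrable fun x => √(p x) * √(q x) := by
  refine (hp.integrable.add hq.integrable).mono'
    (hp.measurable.sqrt.mul hq.measurable.sqrt).aestronglyMeasurable (.of_forall fun x => ?_)
  rw [Real.norm_of_nonneg (by positivity), Pi.add_apply]
  nlinarith [two_mul_le_add_sq √(p x) √(q x), Real.sq_sqrt (hp.nonneg x),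
    Real.sq_sqrt (hq.nonneg x), hp.nonneg x, hq.nonneg x]

theorem sq_hellinger_densityLaw (hp : IsDensity p) (hq : IsDensity q) :
    hellinger d (densityLaw p) (densityLaw q) ^ 2 = 1 - ∫ x, √(p x) * √(q x) := by
  have hrnDeriv : ∀ {r : RV d → ℝ}, IsDensity r →
      ∀ᵐ x, ((densityLaw r).rnDeriv volume x).toReal = r x := fun {r} hr => by
    filter_upwards [Measure.rnDeriv_withDensity volume hr.measurable.ennreal_ofReal] with x hx
    rw [densityLaw, hx, ENNReal.toReal_ofReal (hr.nonneg x)]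
  have hexpand : ∫ x, (√(((densityLaw p).rnDeriv volume x).toReal) -
      √(((densityLaw q).rnDeriv volume x).toReal)) ^ 2 =
      ∫ x, (p x + q x - 2 * (√(p x) * √(q x))) := by
    refine integral_congr_ae ?_
    filter_upwards [hrnDeriv hp, hrnDeriv hq] with x hpx hqx
    rw [hpx, hqx, sub_sq, Real.sq_sqrt (hp.nonneg x), Real.sq_sqrt (hq.nonneg x)]
    ring
  rw [hellinger, Real.sq_sqrt (mul_nonneg (by norm_num) (integral_nonneg fun x => sq_nonneg _)),
    hexpand, integral_sub (f := fun x => p x + q x) (hp.integrable.add hq.integrable)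
      ((hp.integrable_sqrt_mul_sqrt hq).const_mul 2),
    integral_add hp.integrable hq.integrable, hp.integral_eq_one, hq.integral_eq_one,
    integral_const_mul]
  ring

end IsDensity

theorem dHLC_nonneg (P : Measure (RV d)) : 0 ≤ dHLC d P :=
  Real.sInf_nonneg (by rintro r ⟨L, -, rfl⟩; exact Real.sqrt_nonneg _)

theorem dHLC_le_hellinger (P : Measure (RV d)) {L : Measure (RV d)} (hL : L ∈ logConcaveLaws d) :
    dHLC d P ≤ hellinger d P L :=
  csInf_le ⟨0, by rintro r ⟨L, -, rfl⟩; exact Real.sqrt_nonneg _⟩ ⟨L, hL, rfl⟩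

theorem IsLogConcaveFn.convex_superlevel {p : RV d → ℝ} (hp : IsLogConcaveFn d p) (s : ℝ) :
    Convex ℝ {x | s ≤ p x} := by
  intro x hx y hy a b ha hb hab
  obtain rfl : b = 1 - a := by linarith
  rcases le_or_gt s 0 with hs | hs
  · exact hs.trans (hp.1 _)
  · calc s = s ^ a * s ^ (1 - a) := by
          rw [← Real.rpow_add hs, add_sub_cancel, Real.rpow_one]
      _ ≤ p x ^ a * p y ^ (1 - a) := by
          gcongr
          · exact Real.rpow_nonneg (hp.1 x) _
          · exact hx
          · exact hy
      _ ≤ p (a • x + (1 - a) • y) := hp.2 x y a ha (by linarith)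

theorem IsLogConcaveFn.convex_superlevel_sqrt {p : RV d → ℝ} (hp : IsLogConcaveFn d p) (s : ℝ) :
    Convex ℝ {x | s ≤ √(p x)} := by
  rcases le_or_gt s 0 with hs | hs
  · simpa only [hs.trans (Real.sqrt_nonneg _), Set.ofPred_true] using convex_univ
  · simpa only [Real.le_sqrt' hs] using hp.convex_superlevel (s ^ 2)

section Affinity

variable {p q : RV d → ℝ}

theorem IsLogConcaveDensity.isDensity (hq : IsLogConcaveDensity d q) : IsDensity q :=
  ⟨hq.1, hq.2.1.1, hq.2.2⟩

theorem IsLogConcaveDensity.densityLaw_mem (hq : IsLogConcaveDensity d q) :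
    densityLaw q ∈ logConcaveLaws d :=
  ⟨hq.isDensity.isProbabilityMeasure_densityLaw, q, hq.1, hq.2.1, rfl⟩

theorem IsDensity.integral_sqrt_mul_sqrt_le (hp : IsDensity p) (hq : IsLogConcaveDensity d q) :
    ∫ x, √(p x) * √(q x) ≤ 1 - dHLC d (densityLaw p) ^ 2 := by
  rw [le_sub_comm, ← hp.sq_hellinger_densityLaw hq.isDensity]
  gcongr
  · exact dHLC_nonneg _
  · exact dHLC_le_hellinger _ hq.densityLaw_mem

theorem IsDensity.lintegral_sqrt_mul_sqrt_le (hp : IsDensity p) (hq : IsLogConcaveDensity d q) :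
    ∫⁻ x, ENNReal.ofReal (√(p x) * √(q x)) ≤
      ENNReal.ofReal (1 - dHLC d (densityLaw p) ^ 2) := by
  rw [← ofReal_integral_eq_lintegral_ofReal (hp.integrable_sqrt_mul_sqrt hq.isDensity)
    (.of_forall fun x => by positivity)]
  exact ENNReal.ofReal_le_ofReal (hp.integral_sqrt_mul_sqrt_le hq)

end Affinity

/-- The standard Gaussian density on `ℝ^d`; it makes `logConcaveLaws` nonempty and its
likelihood positive, and is mixed into density estimates to make them positive. -/
def gaussPi (x : RV d) : ℝ := ∏ i, gaussianPDFReal 0 1 (x i)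

theorem gaussPi_pos (x : RV d) : 0 < gaussPi x :=
  Finset.prod_pos fun _ _ => gaussianPDFReal_pos _ _ _ one_ne_zero

theorem gaussPi_le_one (x : RV d) : gaussPi x ≤ 1 := by
  refine Finset.prod_le_one (fun _ _ => gaussianPDFReal_nonneg _ _ _) fun i _ => ?_
  rw [gaussianPDFReal]
  refine mul_le_one₀ (inv_le_one_of_one_le₀ (Real.one_le_sqrt.2 ?_)) (Real.exp_pos _).le
    (Real.exp_le_one_iff.2 ?_)
  · rw [NNReal.coe_one, mul_one]
    linarith [Real.pi_gt_three]
  · rw [neg_div, neg_nonpos]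
    positivity

theorem gaussianPDFReal_rpow_mul_le (x y : ℝ) {l : ℝ} (h0 : 0 ≤ l) (h1 : l ≤ 1) :
    gaussianPDFReal 0 1 x ^ l * gaussianPDFReal 0 1 y ^ (1 - l) ≤
      gaussianPDFReal 0 1 (l * x + (1 - l) * y) := by
  have hc : (0 : ℝ) < (√(2 * Real.pi * (1 : NNReal)))⁻¹ := by
    rw [NNReal.coe_one]
    positivity
  have hform : ∀ z, gaussianPDFReal 0 1 z =
      Real.exp (Real.log (√(2 * Real.pi * (1 : NNReal)))⁻¹ - z ^ 2 / 2) := by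
    intro z
    rw [Real.exp_sub, Real.exp_log hc, gaussianPDFReal, neg_div, Real.exp_neg, ← div_eq_mul_inv]
    simp
  rw [hform, hform, hform, ← Real.exp_mul, ← Real.exp_mul, ← Real.exp_add, Real.exp_le_exp]
  nlinarith [mul_nonneg (mul_nonneg h0 (sub_nonneg.2 h1)) (sq_nonneg (x - y))]

theorem isLogConcaveDensity_gaussPi : IsLogConcaveDensity d gaussPi := by
  refine ⟨Finset.measurable_prod _ fun i _ => by fun_prop,
    ⟨fun x => (gaussPi_pos x).le, fun x y l h0 h1 => ?_⟩, ?_⟩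
  · have hnonneg := gaussianPDFReal_nonneg 0 1
    simp only [gaussPi]
    rw [← Real.finsetProd_rpow _ _ (fun _ _ => hnonneg _),
      ← Real.finsetProd_rpow _ _ (fun _ _ => hnonneg _), ← Finset.prod_mul_distrib]
    refine Finset.prod_le_prod (fun i _ => mul_nonneg (Real.rpow_nonneg (hnonneg _) _)
      (Real.rpow_nonneg (hnonneg _) _)) fun i _ => ?_
    simpa using gaussianPDFReal_rpow_mul_le (x i) (y i) h0 h1
  · unfold gaussPi
    rw [integral_fintype_prod_volume_eq_prod (f := fun _ : Fin d => gaussianPDFReal 0 1)]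
    exact Finset.prod_eq_one fun _ _ => integral_gaussianPDFReal_eq_one 0 one_ne_zero

theorem IsDensity.dHLC_le_one {p : RV d → ℝ} (hp : IsDensity p) : dHLC d (densityLaw p) ≤ 1 := by
  have h := hp.integral_sqrt_mul_sqrt_le isLogConcaveDensity_gaussPi
  have h0 : 0 ≤ ∫ x, √(p x) * √(gaussPi x) := integral_nonneg fun x => by positivity
  exact (sq_le_one_iff₀ (dHLC_nonneg _)).1 (by linarith)

section LargeDensities

/-- The unbounded region `±x_i ≥ 1/2`, with the signs prescribed by `s`. -/
def corner (s : Fin d → Bool) : Set (RV d) := orthant s fun i => if s i then 1 / 2 else -(1 / 2)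

theorem measurableSet_corner (s : Fin d → Bool) : MeasurableSet (corner s) := by
  simp only [corner, orthant, Set.ofPred_forall]
  refine MeasurableSet.iInter fun i => ?_
  cases s i
  · exact measurableSet_le (measurable_pi_apply i) measurable_const
  · exact measurableSet_le measurable_const (measurable_pi_apply i)

/-- The cube `[-1/2, 1/2]^d`. -/
def innerCube (d : ℕ) : Set (RV d) := Set.Icc (fun _ => -(1 / 2)) (fun _ => 1 / 2)

theorem innerCube_subset_of_forall_inter_corner_nonempty {A : Set (RV d)} (hA : Convex ℝ A)
    (h : ∀ s, (A ∩ corner s).Nonempty) : innerCube d ⊆ A := by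
  intro x hx
  refine mem_of_forall_inter_orthant_nonempty hA fun s => (h s).mono ?_
  refine Set.inter_subset_inter_right _ fun a ha i => ?_
  have hai := ha i
  have hx1 := hx.1 i
  have hx2 := hx.2 i
  cases hs : s i <;> simp only [hs, Bool.false_eq_true, if_true, if_false] at hai hx1 hx2 ⊢ <;>
    linarith

variable {p : RV d → ℝ}

/-- The homothety with ratio `1 / r` at the peak `y` compresses the inner cube to a set of
volume `r⁻ᵈ` on which `p` is still of the order of `p y`. -/
theorem IsLogConcaveDensity.exp_sub_one_le_pow (hp : IsLogConcaveDensity d p) {y : RV d} {v r : ℝ}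
    (hr : 1 ≤ r) (hy : Real.exp v ≤ p y) (hcube : ∀ x ∈ innerCube d, Real.exp (v - r) ≤ p x) :
    Real.exp (v - 1) ≤ r ^ d := by
  have hr0 : 0 < r := zero_lt_one.trans_le hr
  let H : Set (RV d) := AffineMap.homothety y (1 / r) '' innerCube d
  have hH : ∀ x ∈ H, Real.exp (v - 1) ≤ p x := by
    rintro _ ⟨x, hx, rfl⟩
    have hxy : AffineMap.homothety y (1 / r) x = (1 / r) • x + (1 - 1 / r) • y := by
      rw [AffineMap.homothety_apply, vsub_eq_sub, vadd_eq_add, smul_sub, sub_smul, one_smul]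
      abel
    have hr1 : 1 / r ≤ 1 := (div_le_one hr0).2 hr
    rw [hxy]
    calc Real.exp (v - 1) = Real.exp (v - r) ^ (1 / r) * Real.exp v ^ (1 - 1 / r) := by
          rw [← Real.exp_mul, ← Real.exp_mul, ← Real.exp_add]
          congr 1
          field_simp
          ring
      _ ≤ p x ^ (1 / r) * p y ^ (1 - 1 / r) := by
          have hx' := hcube x hx
          gcongr
          exact Real.rpow_nonneg (hp.2.1.1 x) _
      _ ≤ p ((1 / r) • x + (1 - 1 / r) • y) := hp.2.1.2 x y (1 / r) (by positivity) hr1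
  have hvol : volume H = ENNReal.ofReal ((1 / r) ^ d) := by
    rw [Measure.addHaar_image_homothety, innerCube, Real.volume_Icc_pi]
    norm_num [abs_of_pos hr0]
  have hmass : ENNReal.ofReal (Real.exp (v - 1)) * ENNReal.ofReal ((1 / r) ^ d) ≤ 1 := by
    rw [← hvol, ← hp.isDensity.lintegral_eq_one, ← setLIntegral_const]
    refine le_trans ?_ (setLIntegral_le_lintegral H _)
    exact setLIntegral_mono hp.1.ennreal_ofReal fun x hx => ENNReal.ofReal_le_ofReal (hH x hx)
  rwa [← ENNReal.ofReal_mul (Real.exp_pos _).le, ENNReal.ofReal_le_one, one_div, inv_pow,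
    ← div_eq_mul_inv, div_le_one (by positivity)] at hmass

theorem IsLogConcaveDensity.exists_corner_lt (hp : IsLogConcaveDensity d p) {y : RV d} {v r : ℝ}
    (hr : 1 ≤ r) (hy : Real.exp v ≤ p y) (hlt : r ^ d < Real.exp (v - 1)) :
    ∃ s, ∀ x ∈ corner s, p x < Real.exp (v - r) := by
  by_contra! h
  have hcube := innerCube_subset_of_forall_inter_corner_nonempty
    (hp.2.1.convex_superlevel (Real.exp (v - r))) fun s => by
      obtain ⟨x, hxs, hx⟩ := h s
      exact ⟨x, hx, hxs⟩
  exact (hp.exp_sub_one_le_pow hr hy hcube).not_gt hlt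

theorem eventually_mul_pow_lt_exp_sub_one (d : ℕ) (K : ℝ) :
    ∀ᶠ v in atTop, (K * v) ^ d < Real.exp (v - 1) := by
  have h : Tendsto (fun v : ℝ => (K ^ d * Real.exp 1) * (v ^ d * Real.exp (-v)))
      atTop (nhds 0) := by
    simpa using (Real.tendsto_pow_mul_exp_neg_atTop_nhds_zero d).const_mul (K ^ d * Real.exp 1)
  filter_upwards [h.eventually (gt_mem_nhds zero_lt_one)] with v hv
  rw [Real.exp_neg, ← mul_assoc, ← div_eq_mul_inv, div_lt_one (Real.exp_pos _)] at hv
  rw [mul_pow, Real.exp_sub, lt_div_iff₀ (Real.exp_pos _)]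
  linarith

variable {S : Finset ℕ} {X : ℕ → RV d} {c : ℝ}

theorem prod_le_exp_of_corner {v r : ℝ} {s : Fin d → Bool} (hp0 : ∀ x, 0 ≤ p x) (hr : 0 ≤ r)
    (hmax : ∀ j ∈ S, p (X j) ≤ Real.exp v) (hs : ∀ x ∈ corner s, p x < Real.exp (v - r))
    (hcorner : c * #S ≤ ∑ j ∈ S, (corner s).indicator 1 (X j)) :
    ∏ j ∈ S, p (X j) ≤ Real.exp ((v - r * c) * #S) := by
  calc ∏ j ∈ S, p (X j)
      ≤ ∏ j ∈ S, Real.exp (v - r * (corner s).indicator 1 (X j)) := by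
        refine Finset.prod_le_prod (fun j _ => hp0 _) fun j hj => ?_
        by_cases hjs : X j ∈ corner s
        · rw [Set.indicator_of_mem hjs, Pi.one_apply, mul_one]
          exact (hs _ hjs).le
        · rw [Set.indicator_of_notMem hjs, mul_zero, sub_zero]
          exact hmax j hj
    _ = Real.exp (v * #S - r * ∑ j ∈ S, (corner s).indicator 1 (X j)) := by
        rw [← Real.exp_sum, Finset.sum_sub_distrib, Finset.mul_sum, Finset.sum_const,
          nsmul_eq_mul, mul_comm v]
    _ ≤ Real.exp (v * #S - r * (c * #S)) := by gcongr
    _ = Real.exp ((v - r * c) * #S) := by ring_nf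

theorem exists_forall_prod_le_exp_of_large (d : ℕ) (hc0 : 0 < c) (hc1 : c ≤ 1) (L : ℝ) :
    ∃ M > 0, ∀ p, IsLogConcaveDensity d p → ∀ (S : Finset ℕ) (X : ℕ → RV d),
      (∀ s, c * #S ≤ ∑ j ∈ S, (corner s).indicator 1 (X j)) → (∃ j ∈ S, M < p (X j)) →
      ∏ j ∈ S, p (X j) ≤ Real.exp (-(L * #S)) := by
  obtain ⟨v₀, hv₀⟩ := eventually_atTop.1 <| ((eventually_ge_atTop 1).and
    (eventually_ge_atTop L)).and (eventually_mul_pow_lt_exp_sub_one d (2 / c))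
  refine ⟨Real.exp v₀, Real.exp_pos v₀, fun p hp S X hcorner ⟨j₀, hj₀, hlarge⟩ => ?_⟩
  obtain ⟨j₁, -, hmax⟩ := Finset.exists_max_image S (fun j => p (X j)) ⟨j₀, hj₀⟩
  have hlarge₁ : Real.exp v₀ < p (X j₁) := hlarge.trans_le (hmax j₀ hj₀)
  set v := Real.log (p (X j₁))
  have hv : Real.exp v = p (X j₁) := Real.exp_log ((Real.exp_pos v₀).trans hlarge₁)
  obtain ⟨⟨hv1, hvL⟩, hlt⟩ := hv₀ v (by rw [← Real.exp_le_exp, hv]; exact hlarge₁.le)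
  have hr : 1 ≤ 2 / c * v := one_le_mul_of_one_le_of_one_le ((one_le_div hc0).2 (by linarith)) hv1
  obtain ⟨s, hs⟩ := hp.exists_corner_lt hr hv.le hlt
  refine (prod_le_exp_of_corner hp.2.1.1 (zero_le_one.trans hr) (fun j hj => hv ▸ hmax j hj) hs
    (hcorner s)).trans (Real.exp_le_exp.2 ?_)
  calc (v - 2 / c * v * c) * (#S : ℝ) = -(v * #S) := by
        field_simp
        ring
    _ ≤ -(L * #S) := by gcongr

end LargeDensities

theorem IsIIDLaw.eq_infinitePi {μ : Measure (Seq d)} {P : Measure (RV d)}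
    [IsProbabilityMeasure P] (h : IsIIDLaw d μ P) : μ = Measure.infinitePi fun _ => P := by
  refine Measure.eq_infinitePi _ fun S A hA => ?_
  obtain ⟨t, ht⟩ := S.exists_nat_subset_range
  let A' : ℕ → Set (RV d) := fun j => if j ∈ S then A j else Set.univ
  have hA' : ∀ j, MeasurableSet (A' j) := fun j => by
    by_cases hj : j ∈ S <;> simp [A', hj, hA]
  have hpre : (S : Set ℕ).pi A = prefixMap d t ⁻¹' Set.univ.pi fun s : Fin t => A' s := by
    ext ω
    simp only [Set.mem_pi, Finset.mem_coe, Set.mem_preimage, Set.mem_univ, true_imp_iff, prefixMap]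
    refine ⟨fun hω s => ?_, fun hω j hj => ?_⟩
    · by_cases hs : (s : ℕ) ∈ S <;> simp [A', hs, hω]
    · simpa [A', hj] using hω ⟨j, Finset.mem_range.1 (ht hj)⟩
  have hmeas : Measurable (prefixMap d t) :=
    measurable_pi_lambda _ fun s => measurable_pi_apply (s : ℕ)
  rw [hpre, ← Measure.map_apply hmeas (.univ_pi fun s => hA' s), ← prefixLaw,
    h.2 t _ fun s => hA' s, Fin.prod_univ_eq_prod_range (fun j => P (A' j)),
    ← Finset.prod_subset ht fun j _ hj => by simp [A', hj]]
  exact Finset.prod_congr rfl fun j hj => by simp [A', hj]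

section InfinitePi

variable {ι α : Type*} [MeasurableSpace α] (P : Measure α) [IsProbabilityMeasure P]

theorem ae_infinitePi_forall_mem [Countable ι] {A : Set α} (hA : ∀ᵐ x ∂P, x ∈ A) :
    ∀ᵐ ω ∂Measure.infinitePi fun _ : ι => P, ∀ j, ω j ∈ A :=
  ae_all_iff.2 fun j =>
    (measurePreserving_eval_infinitePi (fun _ => P) j).quasiMeasurePreserving.ae hA

theorem lintegral_infinitePi_prod {v : α → ENNReal} (hv : Measurable v) (S : Finset ι) :
    ∫⁻ ω, ∏ j ∈ S, v (ω j) ∂Measure.infinitePi (fun _ : ι => P) = (∫⁻ x, v x ∂P) ^ #S := by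
  rw [lintegral_prod_eq_prod_lintegral_of_indepFun S (fun j (ω : ι → α) => v (ω j))
    (iIndepFun_infinitePi fun _ => hv) fun j => hv.comp (measurable_pi_apply j)]
  exact Finset.prod_eq_pow_card fun j _ =>
    (measurePreserving_eval_infinitePi (fun _ : ι => P) j).lintegral_comp hv

theorem measure_infinitePi_exp_le_prod_le {v : α → ℝ} (hv : Measurable v) (hv0 : ∀ x, 0 ≤ v x)
    (a : ℝ) {b : ℝ}
    (hb : ∫⁻ x, ENNReal.ofReal (v x) ∂P ≤ ENNReal.ofReal (Real.exp (-b))) (S : Finset ι) :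
    Measure.infinitePi (fun _ => P) {ω | Real.exp (-(a * #S)) ≤ ∏ j ∈ S, v (ω j)} ≤
      ENNReal.ofReal (Real.exp (-((b - a) * #S))) := by
  calc Measure.infinitePi (fun _ => P) {ω | Real.exp (-(a * #S)) ≤ ∏ j ∈ S, v (ω j)}
      ≤ Measure.infinitePi (fun _ => P) {ω | ENNReal.ofReal (Real.exp (-(a * #S))) ≤
          ∏ j ∈ S, ENNReal.ofReal (v (ω j))} := measure_mono fun ω hω => by
        rw [Set.mem_ofPred_eq, ← ENNReal.ofReal_prod_of_nonneg fun j _ => hv0 _]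
        exact ENNReal.ofReal_le_ofReal hω
    _ ≤ (∫⁻ ω, ∏ j ∈ S, ENNReal.ofReal (v (ω j)) ∂Measure.infinitePi fun _ => P) /
          ENNReal.ofReal (Real.exp (-(a * #S))) :=
        meas_ge_le_lintegral_div (Finset.measurable_prod _ fun j _ =>
            (hv.comp (measurable_pi_apply j)).ennreal_ofReal).aemeasurable
          (by simpa using Real.exp_pos _) ENNReal.ofReal_ne_top
    _ ≤ ENNReal.ofReal (Real.exp (-b)) ^ #S / ENNReal.ofReal (Real.exp (-(a * #S))) := by
        rw [lintegral_infinitePi_prod P hv.ennreal_ofReal]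
        gcongr
    _ = ENNReal.ofReal (Real.exp (-((b - a) * #S))) := by
        rw [← ENNReal.ofReal_pow (Real.exp_pos _).le, ← Real.exp_nat_mul,
          ← ENNReal.ofReal_div_of_pos (Real.exp_pos _), ← Real.exp_sub]
        ring_nf

theorem lintegral_exp_neg_indicator_le {A : Set α} (hA : MeasurableSet A) {r : ℝ}
    (hr : ENNReal.ofReal r ≤ P A) :
    ∫⁻ x, ENNReal.ofReal (Real.exp (-A.indicator 1 x)) ∂P ≤
      ENNReal.ofReal (Real.exp (-(r / 2))) := by
  have hint : Integrable (A.indicator (1 : α → ℝ)) P := (integrable_const (1 : ℝ)).indicator hA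
  have hle : ∀ x, Real.exp (-A.indicator (1 : α → ℝ) x) ≤ 1 - A.indicator 1 x / 2 := fun x => by
    by_cases hx : x ∈ A
    · rw [Set.indicator_of_mem hx, Pi.one_apply]
      linarith [Real.exp_neg_one_lt_half]
    · simp [hx]
  calc ∫⁻ x, ENNReal.ofReal (Real.exp (-A.indicator 1 x)) ∂P
      ≤ ∫⁻ x, ENNReal.ofReal (1 - A.indicator 1 x / 2) ∂P :=
        lintegral_mono fun x => ENNReal.ofReal_le_ofReal (hle x)
    _ = ENNReal.ofReal (∫ x, (1 - A.indicator 1 x / 2) ∂P) :=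
        (ofReal_integral_eq_lintegral_ofReal ((integrable_const _).sub (hint.div_const 2))
          (.of_forall fun x => (Real.exp_pos _).le.trans (hle x))).symm
    _ = ENNReal.ofReal (1 - P.real A / 2) := by
        rw [integral_sub (integrable_const _) (hint.div_const 2), integral_div,
          integral_indicator_one hA, integral_const, probReal_univ, one_smul]
    _ ≤ ENNReal.ofReal (Real.exp (-(r / 2))) := by
        have hrA : r ≤ P.real A := (ENNReal.ofReal_le_iff_le_toReal (measure_ne_top _ _)).1 hr
        refine ENNReal.ofReal_le_ofReal ?_
        linarith [Real.one_sub_le_exp_neg (r / 2)]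

theorem measure_infinitePi_sum_indicator_lt_le {A : Set α} (hA : MeasurableSet A) {r : ℝ}
    (hr : ENNReal.ofReal r ≤ P A) (S : Finset ι) :
    Measure.infinitePi (fun _ => P) {ω | ∑ j ∈ S, A.indicator 1 (ω j) < r / 4 * #S} ≤
      ENNReal.ofReal (Real.exp (-(r / 4 * #S))) := by
  have hv : Measurable fun x => Real.exp (-A.indicator 1 x) :=
    Real.measurable_exp.comp (measurable_one.indicator hA).neg
  refine (measure_mono fun ω hω => ?_).trans ((measure_infinitePi_exp_le_prod_le P hv
    (fun x => (Real.exp_pos _).le) (r / 4) (lintegral_exp_neg_indicator_le P hA hr) S).trans_eq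
    (by ring_nf))
  rw [Set.mem_ofPred_eq] at hω ⊢
  rw [← Real.exp_sum, Real.exp_le_exp, Finset.sum_neg_distrib, neg_le_neg_iff]
  exact hω.le

end InfinitePi

section Mixture

variable {α ι : Type*} (w : ι → ENNReal) (f : ι → α → ENNReal) (m : ℕ)

/-- The likelihood of `q` on the observations of index at least `m`; the first `m` observations
are discarded, as in `ULR`. -/
def likelihood (q : α → ENNReal) {t : ℕ} (h : Fin t → α) : ENNReal :=
  ∏ i ∈ {i : Fin t | m ≤ (i : ℕ)}, q (h i)

/-- The likelihood of the Bayesian mixture of the densities `f k` with prior weights `w k`. -/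
def mixtureLikelihood {t : ℕ} (h : Fin t → α) : ENNReal := ∑' k, w k * likelihood m (f k) h

/-- The posterior predictive density of the Bayesian mixture given the observations `h`. -/
def mixturePredictive {t : ℕ} (h : Fin t → α) (x : α) : ENNReal :=
  (∑' k, w k * likelihood m (f k) h * f k x) / mixtureLikelihood w f m h

variable {w f m}

theorem likelihood_prefix (q : α → ENNReal) (ω : ℕ → α) (t : ℕ) :
    likelihood m q (fun i : Fin t => ω i) = ∏ j ∈ Finset.Ico m t, q (ω j) := by
  rw [likelihood, Finset.prod_filter,
    Fin.prod_univ_eq_prod_range (fun j => if m ≤ j then q (ω j) else 1), ← Finset.prod_filter]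
  congr 1
  ext j
  rw [Finset.mem_filter, Finset.mem_range, Finset.mem_Ico, and_comm]

theorem mixtureLikelihood_prefix (ω : ℕ → α) (t : ℕ) :
    mixtureLikelihood w f m (fun i : Fin t => ω i) =
      ∑' k, w k * ∏ j ∈ Finset.Ico m t, f k (ω j) :=
  tsum_congr fun k => by rw [likelihood_prefix]

theorem likelihood_ne_zero {q : α → ENNReal} (hq : ∀ x, q x ≠ 0) {t : ℕ} (h : Fin t → α) :
    likelihood m q h ≠ 0 :=
  Finset.prod_ne_zero_iff.2 fun _ _ => hq _

theorem exists_weight_ne_zero (hw : ∑' k, w k = 1) : ∃ k, w k ≠ 0 := by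
  by_contra! hzero
  simp [hzero] at hw

theorem mixtureLikelihood_ne_zero (hw : ∑' k, w k = 1) (hf : ∀ k x, f k x ≠ 0) {t : ℕ}
    (h : Fin t → α) : mixtureLikelihood w f m h ≠ 0 := by
  obtain ⟨k, hk⟩ := exists_weight_ne_zero hw
  exact fun h0 => mul_ne_zero hk (likelihood_ne_zero (hf k) h) (ENNReal.tsum_eq_zero.1 h0 k)

theorem mixtureLikelihood_ne_top (hw : ∑' k, w k = 1) {b : ENNReal} (hb : b ≠ ⊤)
    (hf : ∀ k x, f k x ≤ b) {t : ℕ} (h : Fin t → α) : mixtureLikelihood w f m h ≠ ⊤ := by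
  refine ne_top_of_le_ne_top (ENNReal.pow_ne_top hb) (b := b ^ #{i : Fin t | m ≤ (i : ℕ)}) ?_
  calc mixtureLikelihood w f m h ≤ ∑' k, w k * b ^ #{i : Fin t | m ≤ (i : ℕ)} :=
        ENNReal.tsum_le_tsum fun k => by
          gcongr
          exact Finset.prod_le_pow_card _ _ _ fun i _ => hf k (h i)
    _ = b ^ #{i : Fin t | m ≤ (i : ℕ)} := by rw [ENNReal.tsum_mul_right, hw, one_mul]

theorem mixturePredictive_ne_top {b : ENNReal} (hb : b ≠ ⊤) (hf : ∀ k x, f k x ≤ b) {t : ℕ}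
    (h : Fin t → α) (x : α) : mixturePredictive w f m h x ≠ ⊤ := by
  refine ne_top_of_le_ne_top hb (ENNReal.div_le_of_le_mul' ?_)
  rw [mixtureLikelihood, ← ENNReal.tsum_mul_right]
  exact ENNReal.tsum_le_tsum fun k => by
    gcongr
    exact hf k x

theorem mixturePredictive_ne_zero (hw : ∑' k, w k = 1) (hf : ∀ k x, f k x ≠ 0) {b : ENNReal}
    (hb : b ≠ ⊤) (hfb : ∀ k x, f k x ≤ b) {t : ℕ} (h : Fin t → α) (x : α) :
    mixturePredictive w f m h x ≠ 0 := by
  obtain ⟨k, hk⟩ := exists_weight_ne_zero hw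
  refine ENNReal.div_ne_zero.2 ⟨fun h0 => ?_, mixtureLikelihood_ne_top hw hb hfb h⟩
  exact mul_ne_zero (mul_ne_zero hk (likelihood_ne_zero (hf k) h)) (hf k x)
    (ENNReal.tsum_eq_zero.1 h0 k)

theorem prod_mixturePredictive (hw : ∑' k, w k = 1) (hf : ∀ k x, f k x ≠ 0) {b : ENNReal}
    (hb : b ≠ ⊤) (hfb : ∀ k x, f k x ≤ b) (ω : ℕ → α) {t : ℕ} (ht : m ≤ t) :
    ∏ j ∈ Finset.Ico m t, mixturePredictive w f m (fun i : Fin j => ω i) (ω j) =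
      ∑' k, w k * ∏ j ∈ Finset.Ico m t, f k (ω j) := by
  induction t, ht using Nat.le_induction with
  | base => simp [hw]
  | succ j hj ih =>
    have hne0 := mixtureLikelihood_ne_zero (m := m) hw hf fun i : Fin j => ω i
    have hne_top := mixtureLikelihood_ne_top (m := m) hw hb hfb fun i : Fin j => ω i
    rw [Finset.prod_Ico_succ_top hj, ih, ← mixtureLikelihood_prefix, mixturePredictive,
      ENNReal.mul_div_cancel hne0 hne_top]
    exact tsum_congr fun k => by rw [likelihood_prefix, Finset.prod_Ico_succ_top hj, mul_assoc]

variable [MeasurableSpace α]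

theorem measurable_likelihood {q : α → ENNReal} (hq : Measurable q) (t : ℕ) :
    Measurable fun h : Fin t → α => likelihood m q h :=
  Finset.measurable_prod _ fun i _ => hq.comp (measurable_pi_apply i)

theorem measurable_mixturePredictive [Countable ι] (hf : ∀ k, Measurable (f k)) (t : ℕ) :
    Measurable (Function.uncurry (mixturePredictive w f m (t := t))) := by
  refine Measurable.div (Measurable.tsum fun k => ?_) (Measurable.tsum fun k => ?_)
  · exact (((measurable_likelihood (hf k) t).comp measurable_fst).const_mul _).mul
      ((hf k).comp measurable_snd)
  · exact ((measurable_likelihood (hf k) t).comp measurable_fst).const_mul _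

theorem lintegral_mixturePredictive [Countable ι] {ν : Measure α} (hfm : ∀ k, Measurable (f k))
    (hf1 : ∀ k, ∫⁻ x, f k x ∂ν = 1) {t : ℕ} {h : Fin t → α}
    (hne0 : mixtureLikelihood w f m h ≠ 0) (hne_top : mixtureLikelihood w f m h ≠ ⊤) :
    ∫⁻ x, mixturePredictive w f m h x ∂ν = 1 := by
  simp_rw [mixturePredictive, div_eq_mul_inv]
  rw [lintegral_mul_const _ (Measurable.tsum fun k => (hfm k).const_mul _),
    lintegral_tsum fun k => ((hfm k).const_mul _).aemeasurable]
  simp_rw [lintegral_const_mul _ (hfm _), hf1, mul_one]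
  exact ENNReal.mul_inv_cancel hne0 hne_top

end Mixture

theorem exists_mixture_estimator {ι : Type*} [Countable ι] {w : ι → ENNReal}
    (hw : ∑' k, w k = 1) {f : ι → RV d → ℝ} (hf : ∀ k, IsDensity (f k)) (hf0 : ∀ k x, 0 < f k x)
    {b : ℝ} (hfb : ∀ k x, f k x ≤ b) :
    ∃ E, IsEstimatorSeq d E ∧ ∀ (k : ι) (t : ℕ) (ω : Seq d), d ≤ t →
      (w k).toReal * ∏ j ∈ Finset.Ico d t, f k (ω j) ≤
        ∏ j ∈ Finset.Ico d t, E j (fun i : Fin j => ω i) (ω j) := by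
  let g : ι → RV d → ENNReal := fun k x => ENNReal.ofReal (f k x)
  have hgm : ∀ k, Measurable (g k) := fun k => (hf k).measurable.ennreal_ofReal
  have hg0 : ∀ k x, g k x ≠ 0 := fun k x => ENNReal.ofReal_ne_zero_iff.2 (hf0 k x)
  have hgb : ∀ k x, g k x ≤ ENNReal.ofReal b := fun k x => ENNReal.ofReal_le_ofReal (hfb k x)
  have hb : ENNReal.ofReal b ≠ ⊤ := ENNReal.ofReal_ne_top
  have htop : ∀ {t} (h : Fin t → RV d) x, mixturePredictive w g d h x ≠ ⊤ := fun {t} h x =>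
    mixturePredictive_ne_top hb hgb h x
  refine ⟨fun t h x => (mixturePredictive w g d h x).toReal, ⟨fun t => ?_, fun t h x => ?_,
    fun t h => ?_⟩, fun k t ω ht => ?_⟩
  · exact (measurable_mixturePredictive hgm t).ennreal_toReal
  · exact ENNReal.toReal_pos (mixturePredictive_ne_zero hw hg0 hb hgb h x) (htop h x)
  · have hm : Measurable (mixturePredictive w g d h) :=
      (measurable_mixturePredictive hgm t).of_uncurry_left
    rw [integral_toReal hm.aemeasurable (.of_forall fun x => (htop h x).lt_top),
      lintegral_mixturePredictive hgm (fun k => (hf k).lintegral_eq_one)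
        (mixtureLikelihood_ne_zero hw hg0 h) (mixtureLikelihood_ne_top hw hb hgb h),
      ENNReal.toReal_one]
  · have hprior : w k * ENNReal.ofReal (∏ j ∈ Finset.Ico d t, f k (ω j)) ≤
        mixtureLikelihood w g d fun i : Fin t => ω i := by
      rw [ENNReal.ofReal_prod_of_nonneg fun j _ => (hf0 k (ω j)).le, mixtureLikelihood_prefix]
      exact ENNReal.le_tsum (f := fun k => w k * ∏ j ∈ Finset.Ico d t, g k (ω j)) k
    rw [← ENNReal.toReal_prod, prod_mixturePredictive hw hg0 hb hgb ω ht,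
      ← mixtureLikelihood_prefix,
      ← ENNReal.toReal_ofReal (Finset.prod_nonneg fun j _ => (hf0 k (ω j)).le),
      ← ENNReal.toReal_mul]
    exact ENNReal.toReal_mono (mixtureLikelihood_ne_top hw hb hgb _) hprior

/-- The prior putting mass `2⁻¹ ^ (n + 1)` on the `n`-th level, uniformly over that level. -/
def dyadicPrior {ι : ℕ → Type*} [∀ n, Fintype (ι n)] (k : Σ n, ι n) : ENNReal :=
  2⁻¹ ^ (k.1 + 1) * (Fintype.card (ι k.1) : ENNReal)⁻¹

theorem tsum_dyadicPrior {ι : ℕ → Type*} [∀ n, Fintype (ι n)] [∀ n, Nonempty (ι n)] :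
    ∑' k : Σ n, ι n, dyadicPrior k = 1 := by
  have hlevel : ∀ n, ∑' i : ι n, dyadicPrior ⟨n, i⟩ = 2⁻¹ ^ (n + 1) := fun n => by
    have hconst : ∀ i : ι n,
        dyadicPrior ⟨n, i⟩ = 2⁻¹ ^ (n + 1) * (Fintype.card (ι n) : ENNReal)⁻¹ := fun _ => rfl
    rw [tsum_fintype, Finset.sum_congr rfl fun i _ => hconst i, Finset.sum_const,
      Finset.card_univ, nsmul_eq_mul, mul_left_comm,
      ENNReal.mul_inv_cancel (by simp [Fintype.card_ne_zero]) (ENNReal.natCast_ne_top _), mul_one]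
  rw [ENNReal.tsum_sigma']
  simp_rw [hlevel]
  rw [ENNReal.tsum_geometric_add_one, ENNReal.one_sub_inv_two, inv_inv,
    ENNReal.inv_mul_cancel two_ne_zero ENNReal.ofNat_ne_top]

/-- A probability density supported on the box `[-1, 1]^d` with values in `[1/B, B]` there. -/
structure IsBoxDensity (B : ℝ) (p : RV d → ℝ) : Prop extends IsDensity p where
  eq_zero : ∀ x ∉ box d, p x = 0
  one_div_le : ∀ x ∈ box d, 1 / B ≤ p x
  le_of_mem : ∀ x ∈ box d, p x ≤ B

/-- A density of the class `DBoxLip d B`. -/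
structure IsBoxLipDensity (B : ℝ) (p : RV d → ℝ) : Prop extends IsBoxDensity B p where
  lipschitz : ∀ x ∈ box d, ∀ y ∈ box d, |p x - p y| ≤ √(∑ i, (x i - y i) ^ 2)

section BoxDensity

variable {B : ℝ} {p : RV d → ℝ}

theorem exists_isBoxLipDensity_of_mem_DBoxLip (hB : 0 < B) {P : Measure (RV d)}
    (hP : P ∈ DBoxLip d B) : ∃ p, IsBoxLipDensity B p ∧ P = densityLaw p := by
  obtain ⟨hprob, p, hpm, rfl, hp0, hpB, hpL⟩ := hP
  have hnonneg : ∀ x, 0 ≤ p x := fun x => by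
    by_cases hx : ∀ i, |x i| ≤ 1
    · exact (one_div_pos.2 hB).le.trans (hpB x hx).1
    · exact (hp0 x hx).ge
  exact ⟨p, { toIsDensity := .of_isProbabilityMeasure hpm hnonneg hprob
              eq_zero := fun x hx => hp0 x (mt mem_box.2 hx)
              one_div_le := fun x hx => (hpB x (mem_box.1 hx)).1
              le_of_mem := fun x hx => (hpB x (mem_box.1 hx)).2
              lipschitz := fun x hx y hy => hpL x y (mem_box.1 hx) (mem_box.1 hy) }, rfl⟩

theorem IsBoxDensity.le (hp : IsBoxDensity B p) (hB : 0 < B) (x : RV d) : p x ≤ B := by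
  by_cases hx : x ∈ box d
  · exact hp.le_of_mem x hx
  · exact (hp.eq_zero x hx).trans_le hB.le

theorem IsBoxDensity.le_densityLaw_corner (hp : IsBoxDensity B p) (hB : 0 < B)
    (s : Fin d → Bool) : ENNReal.ofReal (1 / (B * 2 ^ d)) ≤ densityLaw p (corner s) := by
  let a : RV d := fun i => if s i then 1 / 2 else -1
  let Q : Set (RV d) := Set.Icc a fun i => a i + 1 / 2
  have hQcorner : Q ⊆ corner s := fun x hx i => by
    have hlower := hx.1 i
    have hupper := hx.2 i
    cases hs : s i <;> simp only [a, hs, reduceIte, Bool.false_eq_true] at hlower hupper ⊢ <;>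
      linarith
  have hQbox : Q ⊆ box d := fun x hx => mem_box.2 fun i => abs_le.2 <| by
    have hlower := hx.1 i
    have hupper := hx.2 i
    cases hs : s i <;> simp only [a, hs, reduceIte, Bool.false_eq_true] at hlower hupper <;>
      constructor <;> linarith
  have hvol : volume Q = ENNReal.ofReal (1 / 2) ^ d := by simp [Q, Real.volume_Icc_pi]
  calc ENNReal.ofReal (1 / (B * 2 ^ d)) = ENNReal.ofReal (1 / B) * volume Q := by
        rw [hvol, ← ENNReal.ofReal_pow (by norm_num), ← ENNReal.ofReal_mul (by positivity),
          div_pow, one_pow, div_mul_div_comm, one_mul]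
    _ = ∫⁻ _ in Q, ENNReal.ofReal (1 / B) := by rw [setLIntegral_const]
    _ ≤ ∫⁻ x in Q, ENNReal.ofReal (p x) := setLIntegral_mono' measurableSet_Icc fun x hx =>
        ENNReal.ofReal_le_ofReal (hp.one_div_le x (hQbox hx))
    _ = densityLaw p Q := (withDensity_apply _ measurableSet_Icc).symm
    _ ≤ densityLaw p (corner s) := measure_mono hQcorner

theorem IsBoxDensity.ae_densityLaw_mem_box (hp : IsBoxDensity B p) :
    ∀ᵐ x ∂densityLaw p, x ∈ box d := by
  rw [densityLaw, ae_withDensity_iff hp.measurable.ennreal_ofReal]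
  refine .of_forall fun x hx => ?_
  by_contra hbox
  exact hx (by rw [hp.eq_zero x hbox, ENNReal.ofReal_zero])

end BoxDensity

section Quantization

variable {B : ℝ} {p r : RV d → ℝ} {n : ℕ}

theorem IsBoxLipDensity.abs_sub_cellCorner_le [NeZero n] (hp : IsBoxLipDensity B p)
    {x : RV d} (hx : x ∈ box d) : |p x - p (cellCorner n (cell n x))| ≤ 2 * d / n := by
  refine (hp.lipschitz x hx _ (cellCorner_mem_box _)).trans
    (Real.sqrt_le_iff.2 ⟨by positivity, ?_⟩)
  calc ∑ i, (x i - cellCorner n (cell n x) i) ^ 2 ≤ ∑ _i : Fin d, (2 / n : ℝ) ^ 2 := by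
        refine Finset.sum_le_sum fun i _ => ?_
        rw [← sq_abs]
        exact pow_le_pow_left₀ (abs_nonneg _) (SeqTest.abs_sub_cellCorner_le hx i) 2
    _ = d * (2 / n : ℝ) ^ 2 := by simp
    _ ≤ (d : ℝ) ^ 2 * (2 / n : ℝ) ^ 2 := by
        gcongr
        exact_mod_cast Nat.le_self_pow two_ne_zero d
    _ = (2 * d / n : ℝ) ^ 2 := by ring

/-- The values of a density bounded by `B` at the grid points, quantized in steps of `1/n`. -/
abbrev GridCode (d : ℕ) (B : ℝ) (n : ℕ) := (Fin d → Fin n) → Fin (⌊B * n⌋₊ + 1)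

/-- The quantization of `p`; the truncation at `⌊B * n⌋₊` is inactive for densities bounded
by `B`. -/
def gridCode (B : ℝ) (n : ℕ) (p : RV d → ℝ) : GridCode d B n :=
  fun c => ⟨min ⌊p (cellCorner n c) * n⌋₊ ⌊B * n⌋₊, by omega⟩

theorem IsBoxDensity.gridCode_apply (hp : IsBoxDensity B p) (hB : 0 < B)
    (c : Fin d → Fin n) : (gridCode B n p c : ℕ) = ⌊p (cellCorner n c) * n⌋₊ :=
  min_eq_left (Nat.floor_le_floor (mul_le_mul_of_nonneg_right (hp.le hB _) n.cast_nonneg))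

theorem IsBoxLipDensity.le_add_of_gridCode_eq [NeZero n] (hp : IsBoxLipDensity B p)
    (hr : IsBoxLipDensity B r) (hB : 0 < B) (h : gridCode B n p = gridCode B n r)
    {x : RV d} (hx : x ∈ box d) : p x ≤ r x + (4 * d + 1) / n := by
  have hn : (0 : ℝ) < n := by exact_mod_cast NeZero.pos n
  set z := cellCorner n (cell n x)
  have hfloor : ⌊p z * n⌋₊ = ⌊r z * n⌋₊ := by
    rw [← hp.gridCode_apply hB, ← hr.gridCode_apply hB, h]
  have hpz : p z ≤ r z + 1 / n := by
    refine le_of_mul_le_mul_right ?_ hn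
    calc p z * n ≤ ⌊r z * n⌋₊ + 1 := hfloor ▸ (Nat.lt_floor_add_one _).le
      _ ≤ r z * n + 1 := by
          gcongr
          exact Nat.floor_le (mul_nonneg (hr.nonneg z) hn.le)
      _ = (r z + 1 / n) * n := by field_simp
  have hpx := (abs_le.1 (hp.abs_sub_cellCorner_le (n := n) hx)).2
  have hrx := (abs_le.1 (hr.abs_sub_cellCorner_le (n := n) hx)).1
  calc p x ≤ r x + 2 * d / n + 2 * d / n + 1 / n := by linarith
    _ = r x + (4 * d + 1) / n := by ring

/-- The mixture of `r` with mass `1/(n+1)` of the standard Gaussian, which makes it positive at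
the cost of a factor `1 + 1/n` in ratio. -/
def gaussSmoothing (n : ℕ) (r : RV d → ℝ) (x : RV d) : ℝ :=
  n / (n + 1) * r x + 1 / (n + 1) * gaussPi x

theorem IsDensity.gaussSmoothing (hr : IsDensity r) : IsDensity (gaussSmoothing n r) :=
  hr.convexCombo isLogConcaveDensity_gaussPi.isDensity (by positivity) (by positivity)
    (by field_simp)

theorem gaussSmoothing_pos {x : RV d} (hr : 0 ≤ r x) : 0 < gaussSmoothing n r x :=
  add_pos_of_nonneg_of_pos (by positivity) (mul_pos (by positivity) (gaussPi_pos x))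

theorem gaussSmoothing_le {b : ℝ} (hb : 1 ≤ b) {x : RV d} (hr : r x ≤ b) :
    gaussSmoothing n r x ≤ b := by
  calc gaussSmoothing n r x ≤ n / (n + 1) * b + 1 / (n + 1) * b := by
        unfold gaussSmoothing
        gcongr
        exact (gaussPi_le_one x).trans hb
    _ = b := by field_simp

theorem le_exp_mul_gaussSmoothing [NeZero n] (hB : 0 < B) {x : RV d} (hr : 1 / B ≤ r x)
    {δ : ℝ} (hδ : 0 ≤ δ) (h : p x ≤ r x + δ / n) :
    p x ≤ Real.exp ((B * δ + 1) / n) * gaussSmoothing n r x := by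
  have hn : (0 : ℝ) < n := by exact_mod_cast NeZero.pos n
  have hBr : 1 ≤ B * r x := (div_le_iff₀' hB).1 hr
  have hr0 : 0 ≤ r x := (one_div_pos.2 hB).le.trans hr
  have hsmooth : r x ≤ (1 / n + 1) * gaussSmoothing n r x := by
    rw [gaussSmoothing]
    have hgauss : 0 ≤ (1 / n + 1 : ℝ) * (1 / (n + 1) * gaussPi x) :=
      mul_nonneg (by positivity) (mul_nonneg (by positivity) (gaussPi_pos x).le)
    calc r x = (1 / n + 1) * (n / (n + 1) * r x) := by field_simp; ring
      _ ≤ _ := by rw [mul_add]; exact le_add_of_nonneg_right hgauss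
  have hpos : 0 < gaussSmoothing n r x := gaussSmoothing_pos hr0
  calc p x ≤ r x + δ / n * 1 := by rwa [mul_one]
    _ ≤ r x + δ / n * (B * r x) := by gcongr
    _ = (B * δ / n + 1) * r x := by ring
    _ ≤ (B * δ / n + 1) * ((1 / n + 1) * gaussSmoothing n r x) := by gcongr
    _ ≤ Real.exp (B * δ / n) * (Real.exp (1 / n) * gaussSmoothing n r x) := by
        gcongr <;> exact Real.add_one_le_exp _
    _ = Real.exp ((B * δ + 1) / n) * gaussSmoothing n r x := by
        rw [← mul_assoc, ← Real.exp_add, ← add_div]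

theorem exists_ratio_net (d : ℕ) (hB : 0 < B) (n : ℕ) [NeZero n] :
    ∃ f : GridCode d B n → RV d → ℝ, (∀ k, IsDensity (f k)) ∧ (∀ k x, 0 < f k x) ∧
      (∀ k x, f k x ≤ B + 1) ∧ ∀ p, IsBoxLipDensity B p → ∃ k, ∀ x ∈ box d,
        p x ≤ Real.exp ((B * (4 * d + 1) + 1) / n) * f k x := by
  have hrep : ∀ k : GridCode d B n, ∃ q : RV d → ℝ, IsDensity q ∧ (∀ x, q x ≤ B + 1) ∧
      ∀ p, IsBoxLipDensity B p → gridCode B n p = k →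
        IsBoxLipDensity B q ∧ gridCode B n q = k := by
    intro k
    by_cases hk : ∃ q : RV d → ℝ, IsBoxLipDensity B q ∧ gridCode B n q = k
    · obtain ⟨q, hq, hqk⟩ := hk
      exact ⟨q, hq.toIsDensity, fun x => (hq.le hB x).trans (by linarith), fun _ _ _ => ⟨hq, hqk⟩⟩
    · exact ⟨gaussPi, isLogConcaveDensity_gaussPi.isDensity,
        fun x => (gaussPi_le_one x).trans (by linarith), fun p hp hpk => (hk ⟨p, hp, hpk⟩).elim⟩
  choose q hq hqB hqk using hrep
  refine ⟨fun k => gaussSmoothing n (q k), fun k => (hq k).gaussSmoothing,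
    fun k x => gaussSmoothing_pos ((hq k).nonneg x),
    fun k x => gaussSmoothing_le (by linarith) (hqB k x), fun p hp => ⟨gridCode B n p, ?_⟩⟩
  obtain ⟨hqL, hcode⟩ := hqk _ p hp rfl
  exact fun x hx => le_exp_mul_gaussSmoothing hB (hqL.one_div_le x hx) (by positivity)
    (hp.le_add_of_gridCode_eq hqL hB hcode.symm hx)

theorem card_gridCode_le (hB : 0 < B) :
    (Fintype.card (GridCode d B n) : ℝ) ≤ Real.exp (B * n ^ (d + 1)) := by
  have hlevels : ((⌊B * n⌋₊ + 1 : ℕ) : ℝ) ≤ Real.exp (B * n) := by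
    push_cast
    exact (by gcongr; exact Nat.floor_le (by positivity) : _ ≤ B * n + 1).trans
      (Real.add_one_le_exp _)
  calc (Fintype.card (GridCode d B n) : ℝ) = ((⌊B * n⌋₊ + 1 : ℕ) : ℝ) ^ n ^ d := by simp
    _ ≤ Real.exp (B * n) ^ n ^ d := by gcongr
    _ = Real.exp (B * n ^ (d + 1)) := by
        rw [← Real.exp_nat_mul]
        push_cast
        ring_nf

end Quantization

theorem exp_le_dyadicPrior {B : ℝ} (hB : 0 < B) (k : Σ m : ℕ, GridCode d B (m + 1)) :
    Real.exp (-((B + 1) * (k.1 + 1 : ℕ) ^ (d + 1))) ≤ (dyadicPrior k).toReal := by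
  obtain ⟨m, k⟩ := k
  have hpow : (2 : ℝ) ^ (m + 1) ≤ Real.exp ((m + 1 : ℕ) ^ (d + 1)) := by
    calc (2 : ℝ) ^ (m + 1) ≤ Real.exp 1 ^ (m + 1) := by
          gcongr
          linarith [Real.add_one_le_exp (1 : ℝ)]
      _ = Real.exp (m + 1 : ℕ) := by rw [← Real.exp_nat_mul, mul_one]
      _ ≤ Real.exp ((m + 1 : ℕ) ^ (d + 1)) := by
          gcongr
          exact_mod_cast Nat.le_self_pow d.succ_ne_zero (m + 1)
  have hval : (dyadicPrior (⟨m, k⟩ : Σ m : ℕ, GridCode d B (m + 1))).toReal =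
      (2 ^ (m + 1) * (Fintype.card (GridCode d B (m + 1)) : ℝ))⁻¹ := by
    rw [dyadicPrior, ENNReal.toReal_mul, ENNReal.toReal_inv, ENNReal.toReal_natCast, mul_inv,
      ENNReal.toReal_pow, ENNReal.toReal_inv, ENNReal.toReal_ofNat, inv_pow]
  rw [hval, Real.exp_neg]
  refine inv_anti₀ (mul_pos (by positivity) (by exact_mod_cast Fintype.card_pos)) ?_
  calc (2 : ℝ) ^ (m + 1) * (Fintype.card (GridCode d B (m + 1)) : ℝ)
      ≤ Real.exp ((m + 1 : ℕ) ^ (d + 1)) * Real.exp (B * (m + 1 : ℕ) ^ (d + 1)) := by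
        gcongr
        exact card_gridCode_le hB
    _ = Real.exp ((B + 1) * (m + 1 : ℕ) ^ (d + 1)) := by
        rw [← Real.exp_add]
        ring_nf

theorem prod_le_exp_mul_prod {ι : Type*} {s : Finset ι} {a b : ι → ℝ} {δ : ℝ}
    (ha : ∀ i ∈ s, 0 ≤ a i) (hab : ∀ i ∈ s, a i ≤ Real.exp δ * b i) :
    ∏ i ∈ s, a i ≤ Real.exp (δ * #s) * ∏ i ∈ s, b i := by
  calc ∏ i ∈ s, a i ≤ ∏ i ∈ s, Real.exp δ * b i := Finset.prod_le_prod ha hab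
    _ = Real.exp (δ * #s) * ∏ i ∈ s, b i := by
        rw [Finset.prod_mul_distrib, Finset.prod_const, ← Real.exp_nat_mul, mul_comm δ]

theorem exists_estimator (d : ℕ) {B : ℝ} (hB : 0 < B) :
    ∃ E, IsEstimatorSeq d E ∧ ∀ p, IsBoxLipDensity B p → ∀ (n : ℕ) [NeZero n] (t : ℕ)
      (ω : Seq d), d ≤ t → (∀ j, ω j ∈ box d) →
        Real.exp (-((B + 1) * n ^ (d + 1) + (B * (4 * d + 1) + 1) / n * (t - d : ℕ))) *
            ∏ j ∈ Finset.Ico d t, p (ω j) ≤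
          ∏ j ∈ Finset.Ico d t, E j (fun i : Fin j => ω i) (ω j) := by
  choose f hf hf0 hfB hnet using fun m : ℕ => exists_ratio_net d hB (m + 1)
  obtain ⟨E, hE, hmix⟩ := exists_mixture_estimator (ι := Σ m : ℕ, GridCode d B (m + 1))
    (f := fun k => f k.1 k.2) (w := dyadicPrior) tsum_dyadicPrior (fun k => hf k.1 k.2)
    (fun k => hf0 k.1 k.2) (fun k => hfB k.1 k.2)
  refine ⟨E, hE, fun p hp n _ t ω ht hω => ?_⟩
  obtain ⟨m, rfl⟩ := Nat.exists_eq_add_one_of_ne_zero (NeZero.ne n)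
  obtain ⟨k, hk⟩ := hnet m p hp
  have hprior := exp_le_dyadicPrior hB ⟨m, k⟩
  have hratio := prod_le_exp_mul_prod (s := Finset.Ico d t) (fun j _ => hp.nonneg (ω j))
    fun j _ => hk _ (hω j)
  have hf_nonneg : 0 ≤ ∏ j ∈ Finset.Ico d t, f m k (ω j) :=
    Finset.prod_nonneg fun j _ => (hf0 m k _).le
  rw [Nat.card_Ico] at hratio
  rw [neg_add, Real.exp_add, mul_assoc]
  refine le_trans ?_ (hmix ⟨m, k⟩ t ω ht)
  refine mul_le_mul hprior ?_ ?_ ENNReal.toReal_nonneg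
  · rwa [Real.exp_neg, inv_mul_le_iff₀ (Real.exp_pos _)]
  · exact mul_nonneg (Real.exp_pos _).le (Finset.prod_nonneg fun j _ => hp.nonneg _)

section LikelihoodSeparation

variable {n : ℕ} {B η a b c : ℝ} {p q : RV d → ℝ} {S : Finset ℕ} {ω : Seq d}
  {μ : Measure (Seq d)}

theorem IsBoxDensity.pos (hp : IsBoxDensity B p) (hB : 0 < B) {x : RV d} (hx : x ∈ box d) :
    0 < p x :=
  (one_div_pos.2 hB).trans_le (hp.one_div_le x hx)

theorem IsBoxDensity.exp_neg_log_mul_card_le_prod (hp : IsBoxDensity B p) (hB : 0 < B)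
    (hω : ∀ j, ω j ∈ box d) : Real.exp (-(Real.log B * #S)) ≤ ∏ j ∈ S, p (ω j) := by
  calc Real.exp (-(Real.log B * #S)) = ∏ _j ∈ S, 1 / B := by
        rw [Finset.prod_const, Real.exp_neg, mul_comm, Real.exp_nat_mul, Real.exp_log hB,
          one_div, inv_pow]
    _ ≤ ∏ j ∈ S, p (ω j) :=
        Finset.prod_le_prod (fun j _ => by positivity) fun j _ => hp.one_div_le _ (hω j)

theorem IsDensity.measure_exp_le_prod_div_sqrt_le (hp : IsDensity p)
    (hμ : IsIIDLaw d μ (densityLaw p)) {g : RV d → ℝ} (hgm : Measurable g) (hg0 : ∀ x, 0 ≤ g x)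
    (hg : ∫⁻ x, ENNReal.ofReal (√(p x) * g x) ≤ ENNReal.ofReal (1 - b)) (a : ℝ)
    (S : Finset ℕ) :
    μ {ω | Real.exp (-(a * #S)) ≤ ∏ j ∈ S, g (ω j) / √(p (ω j))} ≤
      ENNReal.ofReal (Real.exp (-((b - a) * #S))) := by
  have := hp.isProbabilityMeasure_densityLaw
  have hm : Measurable fun x => g x / √(p x) := hgm.div hp.measurable.sqrt
  rw [hμ.eq_infinitePi]
  refine measure_infinitePi_exp_le_prod_le _ hm (fun x => div_nonneg (hg0 x) (Real.sqrt_nonneg _))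
    a ?_ S
  calc ∫⁻ x, ENNReal.ofReal (g x / √(p x)) ∂densityLaw p
      = ∫⁻ x, ENNReal.ofReal (√(p x) * g x) := by
        rw [densityLaw, lintegral_withDensity_eq_lintegral_mul _ hp.measurable.ennreal_ofReal
          hm.ennreal_ofReal]
        refine lintegral_congr fun x => ?_
        rw [Pi.mul_apply, ← ENNReal.ofReal_mul (hp.nonneg x), mul_div_left_comm, Real.div_sqrt,
          mul_comm]
    _ ≤ ENNReal.ofReal (1 - b) := hg
    _ ≤ ENNReal.ofReal (Real.exp (-b)) := ENNReal.ofReal_le_ofReal (Real.one_sub_le_exp_neg b)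

/-- The labels of the step functions whose affinity with `√p` is at most `1 - b`. -/
def separatedLabels (n : ℕ) [NeZero n] (η b : ℝ) (p : RV d → ℝ) :
    Finset ((Fin d → Fin n) → Fin (n + 1)) :=
  {U | ∫⁻ x, ENNReal.ofReal (√(p x) * stepFn η U x) ≤ ENNReal.ofReal (1 - b)}

/-- The sample paths on which the likelihood argument works: `p` beats every step function
separated from it by `2 * a` on the sample `S`, which visits every corner of the box with
frequency at least `c`. -/
structure IsTypicalPath (n : ℕ) [NeZero n] (η a c : ℝ) (p : RV d → ℝ) (S : Finset ℕ)
    (ω : Seq d) : Prop where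
  mem_box : ∀ j, ω j ∈ box d
  le_sum_corner : ∀ s, c * #S ≤ ∑ j ∈ S, (corner s).indicator 1 (ω j)
  prod_stepFn_lt : ∀ U ∈ separatedLabels n η (2 * a) p,
    ∏ j ∈ S, stepFn η U (ω j) / √(p (ω j)) < Real.exp (-(a * #S))

theorem card_labels_le_exp (d n : ℕ) :
    (Fintype.card ((Fin d → Fin n) → Fin (n + 1)) : ℝ) ≤ Real.exp (n ^ (d + 1)) := by
  calc (Fintype.card ((Fin d → Fin n) → Fin (n + 1)) : ℝ) = (n + 1 : ℝ) ^ n ^ d := by simp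
    _ ≤ Real.exp n ^ n ^ d := by
        gcongr
        exact Real.add_one_le_exp _
    _ = Real.exp (n ^ (d + 1)) := by
        rw [← Real.exp_nat_mul]
        push_cast
        ring_nf

theorem IsBoxDensity.measure_exists_corner_lt_le (hp : IsBoxDensity B p) (hB : 0 < B)
    (hμ : IsIIDLaw d μ (densityLaw p)) (S : Finset ℕ) :
    μ {ω | ∃ s, ∑ j ∈ S, (corner s).indicator 1 (ω j) < 1 / (B * 2 ^ d) / 4 * #S} ≤
      ENNReal.ofReal (2 ^ d * Real.exp (-(1 / (B * 2 ^ d) / 4 * #S))) := by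
  have := hp.isProbabilityMeasure_densityLaw
  rw [hμ.eq_infinitePi, Set.ofPred_exists]
  refine (measure_iUnion_fintype_le _ _).trans ((Finset.sum_le_sum fun s _ =>
    measure_infinitePi_sum_indicator_lt_le _ (measurableSet_corner s)
      (hp.le_densityLaw_corner hB s) S).trans_eq ?_)
  simp [ENNReal.ofReal_mul, ENNReal.ofReal_pow]

theorem IsDensity.measure_exists_separatedLabel_le [NeZero n] (hp : IsDensity p)
    (hμ : IsIIDLaw d μ (densityLaw p)) (hη : 0 < η) (a : ℝ) (S : Finset ℕ) :
    μ {ω | ∃ U ∈ separatedLabels n η (2 * a) p,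
        Real.exp (-(a * #S)) ≤ ∏ j ∈ S, stepFn η U (ω j) / √(p (ω j))} ≤
      ENNReal.ofReal (Real.exp (n ^ (d + 1) - a * #S)) := by
  have hstep : ∀ U ∈ separatedLabels n η (2 * a) p,
      μ {ω | Real.exp (-(a * #S)) ≤ ∏ j ∈ S, stepFn η U (ω j) / √(p (ω j))} ≤
        ENNReal.ofReal (Real.exp (-(a * #S))) := fun U hU => by
    simpa only [two_mul, add_sub_cancel_right] using
      hp.measure_exp_le_prod_div_sqrt_le hμ (measurable_stepFn U)
        (fun x => (stepFn_pos hη U x).le) (Finset.mem_filter.1 hU).2 a S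
  calc _ = μ (⋃ U ∈ separatedLabels n η (2 * a) p,
          {ω | Real.exp (-(a * #S)) ≤ ∏ j ∈ S, stepFn η U (ω j) / √(p (ω j))}) := by
        congr 1
        ext ω
        simp
    _ ≤ ∑ _U ∈ separatedLabels n η (2 * a) p, ENNReal.ofReal (Real.exp (-(a * #S))) :=
        (measure_biUnion_finset_le _ _).trans (Finset.sum_le_sum hstep)
    _ = ENNReal.ofReal (#(separatedLabels n η (2 * a) p) * Real.exp (-(a * #S))) := by
        simp [ENNReal.ofReal_mul]
    _ ≤ ENNReal.ofReal (Real.exp (n ^ (d + 1) - a * #S)) := by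
        rw [sub_eq_add_neg, Real.exp_add]
        gcongr
        exact (Nat.cast_le.2 (Finset.card_le_univ _)).trans (card_labels_le_exp d n)

theorem IsBoxDensity.measure_not_isTypicalPath_le [NeZero n] (hp : IsBoxDensity B p) (hB : 0 < B)
    (hμ : IsIIDLaw d μ (densityLaw p)) (hη : 0 < η) (hb : b ≤ 1 / (B * 2 ^ d) / 4) (hba : b ≤ a)
    (S : Finset ℕ) :
    μ {ω | ¬ IsTypicalPath n η a (1 / (B * 2 ^ d) / 4) p S ω} ≤
      ENNReal.ofReal ((2 ^ d + 1) * Real.exp (n ^ (d + 1) - b * #S)) := by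
  have hbox : μ {ω | ¬ ∀ j, ω j ∈ box d} = 0 := by
    have := hp.isProbabilityMeasure_densityLaw
    rw [hμ.eq_infinitePi]
    exact ae_infinitePi_forall_mem _ hp.ae_densityLaw_mem_box
  have hsub : {ω | ¬ IsTypicalPath n η a (1 / (B * 2 ^ d) / 4) p S ω} ⊆
      {ω | ¬ ∀ j, ω j ∈ box d} ∪
        ({ω | ∃ s, ∑ j ∈ S, (corner s).indicator 1 (ω j) < 1 / (B * 2 ^ d) / 4 * #S} ∪
          {ω | ∃ U ∈ separatedLabels n η (2 * a) p,
            Real.exp (-(a * #S)) ≤ ∏ j ∈ S, stepFn η U (ω j) / √(p (ω j))}) := by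
    intro ω hω
    by_contra! h
    simp only [Set.mem_union, Set.mem_ofPred_eq, not_or, not_not, not_exists, not_and, not_lt,
      not_le] at h
    exact hω ⟨h.1, h.2.1, h.2.2⟩
  refine (measure_mono hsub).trans ((measure_union_le _ _).trans ?_)
  rw [hbox, zero_add, add_mul, one_mul, ENNReal.ofReal_add (by positivity) (by positivity)]
  refine (measure_union_le _ _).trans (add_le_add
    ((hp.measure_exists_corner_lt_le hB hμ S).trans (ENNReal.ofReal_le_ofReal ?_))
    ((hp.measure_exists_separatedLabel_le hμ hη a S).trans (ENNReal.ofReal_le_ofReal ?_)))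
  · have hbS : b * #S ≤ 1 / (B * 2 ^ d) / 4 * #S := by gcongr
    gcongr
    linarith [show (0 : ℝ) ≤ (n : ℝ) ^ (d + 1) by positivity]
  · gcongr

/-- On the sample `S` the likelihood of every log-concave density is smaller than that of `p` by
a factor `exp (a * #S)`. -/
def DominatesLogConcave (a : ℝ) (p : RV d → ℝ) (S : Finset ℕ) (ω : Seq d) : Prop :=
  ∀ q, IsLogConcaveDensity d q →
    ∏ j ∈ S, q (ω j) ≤ Real.exp (-(a * #S)) * ∏ j ∈ S, p (ω j)

theorem IsTypicalPath.prod_le_of_forall_le [NeZero n] (hω : IsTypicalPath n η a c p S ω)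
    (hp : IsBoxDensity B p) (hB : 0 < B) (hη : 0 < η) (hq : IsLogConcaveDensity d q)
    (hfine : √B * (2 ^ d * (1 + 4 ^ d) * η) + 2 * a ≤ dHLC d (densityLaw p) ^ 2)
    (hqη : ∀ j ∈ S, √(q (ω j)) ≤ n * η) :
    ∏ j ∈ S, q (ω j) ≤ Real.exp (-(2 * a * #S)) * ∏ j ∈ S, p (ω j) := by
  have hpos : ∀ j, 0 < p (ω j) := fun j => hp.pos hB (hω.mem_box j)
  have hsep : levelCount n η (fun x => √(q x)) ∈ separatedLabels n η (2 * a) p := by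
    refine Finset.mem_filter.2 ⟨Finset.mem_univ _, ?_⟩
    refine (lintegral_sqrt_mul_stepFn_levelCount_le (fun x => Real.sqrt_nonneg _) hq.1.sqrt
      hq.2.1.convex_superlevel_sqrt hη hp.measurable hp.eq_zero hp.le_of_mem).trans ?_
    have haff : 0 ≤ 1 - dHLC d (densityLaw p) ^ 2 :=
      sub_nonneg.2 (pow_le_one₀ (dHLC_nonneg _) hp.dHLC_le_one)
    refine (add_le_add_left (hp.lintegral_sqrt_mul_sqrt_le hq) _).trans ?_
    rw [← ENNReal.ofReal_add haff (by positivity)]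
    exact ENNReal.ofReal_le_ofReal (by linarith)
  have hroot : ∏ j ∈ S, √(q (ω j)) / √(p (ω j)) ≤ Real.exp (-(a * #S)) := by
    refine (Finset.prod_le_prod (fun j _ => by positivity) fun j hj => ?_).trans
      (hω.prod_stepFn_lt _ hsep).le
    gcongr
    exact le_stepFn_levelCount (g := fun x => √(q x)) hη (hqη j hj)
  calc ∏ j ∈ S, q (ω j)
      = (∏ j ∈ S, √(q (ω j)) / √(p (ω j))) ^ 2 * ∏ j ∈ S, p (ω j) := by
        rw [← Finset.prod_pow, ← Finset.prod_mul_distrib]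
        refine Finset.prod_congr rfl fun j _ => ?_
        rw [div_pow, Real.sq_sqrt (hq.2.1.1 _), Real.sq_sqrt (hpos j).le,
          div_mul_cancel₀ _ (hpos j).ne']
    _ ≤ Real.exp (-(a * #S)) ^ 2 * ∏ j ∈ S, p (ω j) := by
        gcongr
        exact Finset.prod_nonneg fun j _ => (hpos j).le
    _ = Real.exp (-(2 * a * #S)) * ∏ j ∈ S, p (ω j) := by
        rw [← Real.exp_nat_mul]
        push_cast
        ring_nf

theorem exists_forall_isTypicalPath_dominatesLogConcave (d : ℕ) (hB : 0 < B) (hc0 : 0 < c)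
    (hc1 : c ≤ 1) :
    ∃ M > 0, ∀ p, IsBoxDensity B p →
      ∀ (n : ℕ) [NeZero n] (a : ℝ) (S : Finset ℕ) (ω : Seq d),
      IsTypicalPath n (M / n) a c p S ω → 2 * a ≤ 1 →
      √B * (2 ^ d * (1 + 4 ^ d) * (M / n)) + 2 * a ≤ dHLC d (densityLaw p) ^ 2 →
      DominatesLogConcave (2 * a) p S ω := by
  obtain ⟨M, hM, hlarge⟩ := exists_forall_prod_le_exp_of_large d hc0 hc1 (Real.log B + 1)
  refine ⟨√M, Real.sqrt_pos.2 hM, fun p hp n _ a S ω hω ha hfine q hq => ?_⟩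
  have hn : (0 : ℝ) < n := by exact_mod_cast NeZero.pos n
  by_cases hex : ∃ j ∈ S, M < q (ω j)
  · calc ∏ j ∈ S, q (ω j) ≤ Real.exp (-((Real.log B + 1) * #S)) :=
          hlarge q hq S ω hω.le_sum_corner hex
      _ ≤ Real.exp (-(2 * a * #S)) * Real.exp (-(Real.log B * #S)) := by
          rw [← Real.exp_add, ← neg_add, ← add_mul, add_comm (2 * a)]
          gcongr
      _ ≤ Real.exp (-(2 * a * #S)) * ∏ j ∈ S, p (ω j) := by
          gcongr
          exact hp.exp_neg_log_mul_card_le_prod hB hω.mem_box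
  · push Not at hex
    refine hω.prod_le_of_forall_le hp hB (by positivity) hq hfine fun j hj => ?_
    rw [mul_div_cancel₀ _ hn.ne']
    exact Real.sqrt_le_sqrt (hex j hj)

theorem exists_likelihood_separation (d : ℕ) (hB : 1 < B) :
    ∃ C > 0, ∃ κ > 0, ∀ p, IsBoxDensity B p → ∀ μ : Measure (Seq d),
      IsIIDLaw d μ (densityLaw p) → ∀ (n : ℕ) [NeZero n],
      C ≤ n * dHLC d (densityLaw p) ^ 2 → ∀ S : Finset ℕ,
        μ {ω | ¬ ((∀ j, ω j ∈ box d) ∧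
            DominatesLogConcave (dHLC d (densityLaw p) ^ 2 / 2) p S ω)} ≤
          ENNReal.ofReal ((2 ^ d + 1) *
            Real.exp (n ^ (d + 1) - κ * dHLC d (densityLaw p) ^ 2 * #S)) := by
  have hB0 : 0 < B := by linarith
  set κ : ℝ := 1 / (B * 2 ^ d) / 4
  have hκ0 : 0 < κ := by positivity
  have hκ1 : κ ≤ 1 / 4 := by
    refine div_le_div_of_nonneg_right ((div_le_one (by positivity)).2 ?_) (by norm_num)
    exact one_le_mul_of_one_le_of_one_le hB.le (one_le_pow₀ one_le_two)
  obtain ⟨M, hM, hdom⟩ :=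
    exists_forall_isTypicalPath_dominatesLogConcave d hB0 hκ0 (hκ1.trans (by norm_num))
  refine ⟨2 * (√B * (2 ^ d * (1 + 4 ^ d) * M)), by positivity, κ, hκ0,
    fun p hp μ hμ n _ hCn S => ?_⟩
  set ε := dHLC d (densityLaw p)
  have hn : (0 : ℝ) < n := by exact_mod_cast NeZero.pos n
  have hε1 : ε ^ 2 ≤ 1 := pow_le_one₀ (dHLC_nonneg _) hp.dHLC_le_one
  have hfine : √B * (2 ^ d * (1 + 4 ^ d) * (M / n)) + 2 * (ε ^ 2 / 4) ≤ ε ^ 2 := by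
    have h : √B * (2 ^ d * (1 + 4 ^ d) * M) / n ≤ ε ^ 2 / 2 := by
      rw [div_le_iff₀ hn]
      linarith
    linarith [show √B * (2 ^ d * (1 + 4 ^ d) * (M / n)) =
      √B * (2 ^ d * (1 + 4 ^ d) * M) / n by ring]
  have hκε : κ * ε ^ 2 ≤ ε ^ 2 / 4 := by
    linarith [mul_le_mul_of_nonneg_right hκ1 (sq_nonneg ε)]
  calc _ ≤ μ {ω | ¬ IsTypicalPath n (M / n) (ε ^ 2 / 4) κ p S ω} := by
        refine measure_mono fun ω => mt fun hω => ⟨hω.mem_box, ?_⟩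
        convert hdom p hp n _ S ω hω (by linarith) hfine using 1
        ring
    _ ≤ ENNReal.ofReal ((2 ^ d + 1) * Real.exp (n ^ (d + 1) - κ * ε ^ 2 * #S)) :=
        hp.measure_not_isTypicalPath_le hB0 hμ (by positivity)
          (mul_le_of_le_one_right hκ0.le hε1)
          hκε S

end LikelihoodSeparation

section RejectionTime

variable {B α a b : ℝ}

theorem DominatesLogConcave.one_div_le_ULR {p : RV d → ℝ} {t : ℕ} {ω : Seq d}
    {E : (t : ℕ) → (Fin t → RV d) → RV d → ℝ}
    (hdom : DominatesLogConcave a p (Finset.Ico d t) ω) (hp : ∀ x, 0 ≤ p x) (ht : d < t)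
    (hα : 0 < α)
    (hE : Real.exp (-b) * ∏ j ∈ Finset.Ico d t, p (ω j) ≤
      ∏ j ∈ Finset.Ico d t, E j (fun i : Fin j => ω i) (ω j))
    (hab : Real.log (1 / α) + b ≤ a * (t - d : ℕ)) : 1 / α ≤ ULR d E t ω := by
  set L := ∏ j ∈ Finset.Ico d t, p (ω j)
  have hL : 0 ≤ L := Finset.prod_nonneg fun j _ => hp _
  have hsup : ∀ q : {q : RV d → ℝ // IsLogConcaveDensity d q},
      ∏ j ∈ Finset.Ico d t, q.1 (ω j) ≤ Real.exp (-(a * (t - d : ℕ))) * L := by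
    intro q
    simpa only [Nat.card_Ico] using hdom q.1 q.2
  have hbdd := bddAbove_def.2 ⟨_, Set.forall_mem_range.2 hsup⟩
  have hpos : 0 < ⨆ q : {q : RV d → ℝ // IsLogConcaveDensity d q},
      ∏ j ∈ Finset.Ico d t, q.1 (ω j) :=
    (Finset.prod_pos fun j _ => gaussPi_pos (ω j)).trans_le
      (le_ciSup hbdd ⟨gaussPi, isLogConcaveDensity_gaussPi⟩)
  rw [ULR, if_neg (not_le.2 ht), le_div_iff₀ hpos]
  calc _ ≤ 1 / α * (Real.exp (-(a * (t - d : ℕ))) * L) := by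
        gcongr
        exact Real.iSup_le hsup (by positivity)
    _ = Real.exp (Real.log (1 / α) + -(a * (t - d : ℕ))) * L := by
        rw [Real.exp_add, Real.exp_log (by positivity), mul_assoc]
    _ ≤ Real.exp (-b) * L := by
        gcongr
        linarith
    _ ≤ _ := hE

theorem exists_forall_measure_ULR_lt_le (d : ℕ) (hB : 1 < B) :
    ∃ E, IsEstimatorSeq d E ∧ ∃ C > 0, ∃ κ > 0, ∀ p, IsBoxLipDensity B p →
      ∀ μ : Measure (Seq d), IsIIDLaw d μ (densityLaw p) →
      ∀ (n : ℕ) [NeZero n], C ≤ n * dHLC d (densityLaw p) ^ 2 →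
      ∀ (α : ℝ) (t : ℕ), 0 < α → d < t →
      Real.log (1 / α) + (B + 1) * n ^ (d + 1) ≤ dHLC d (densityLaw p) ^ 2 / 4 * (t - d : ℕ) →
        μ {ω | ULR d E t ω < 1 / α} ≤ ENNReal.ofReal ((2 ^ d + 1) *
          Real.exp (n ^ (d + 1) - κ * dHLC d (densityLaw p) ^ 2 * (t - d : ℕ))) := by
  have hB0 : 0 < B := by linarith
  obtain ⟨E, hE, hregret⟩ := exists_estimator d hB0
  obtain ⟨C, hC, κ, hκ, hsep⟩ := exists_likelihood_separation d hB
  set D := B * (4 * d + 1) + 1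
  have hD : 0 < D := by positivity
  refine ⟨E, hE, C + 4 * D, by positivity, κ, hκ, fun p hp μ hμ n _ hn α t hα ht hlog => ?_⟩
  set ε := dHLC d (densityLaw p)
  have hn0 : (0 : ℝ) < n := by exact_mod_cast NeZero.pos n
  have hDn : D / n ≤ ε ^ 2 / 4 := by
    rw [div_le_iff₀ hn0]
    linarith
  have hDt : D / n * (t - d : ℕ) ≤ ε ^ 2 / 4 * (t - d : ℕ) := by gcongr
  calc μ {ω | ULR d E t ω < 1 / α}
      ≤ μ {ω | ¬ ((∀ j, ω j ∈ box d) ∧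
          DominatesLogConcave (ε ^ 2 / 2) p (Finset.Ico d t) ω)} := by
        refine measure_mono fun ω hω h => ?_
        exact hω.not_ge (h.2.one_div_le_ULR hp.nonneg ht hα (hregret p hp n t ω ht.le h.1)
          (by linarith))
    _ ≤ _ := by
        simpa only [Nat.card_Ico] using hsep p hp.toIsBoxDensity μ hμ n (by linarith)
          (Finset.Ico d t)

/-- With `n ≈ C / ε²` the cost `n ^ (d + 1)` is of order `ε ^ (-2 * (d + 1))`, and the gain `ε ^ 2`
per observation pays for it after `ε ^ (-2 * (d + 2))` observations. -/
theorem exists_grid_size (d : ℕ) {C κ G l : ℝ} (hC : 0 < C) (hκ : 0 < κ) (hG : 0 ≤ G)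
    (hl : 0 ≤ l) :
    ∃ A > 0, ∀ ε : ℝ, 0 < ε → ε ≤ 1 → ∃ n : ℕ, n ≠ 0 ∧ C ≤ n * ε ^ 2 ∧
      ∀ u s : ℝ, 0 ≤ u → u + A * (ε ^ 2)⁻¹ ^ (d + 2) ≤ s →
        l + G * n ^ (d + 1) ≤ ε ^ 2 / 4 * s ∧ n ^ (d + 1) - κ * ε ^ 2 * s ≤ -(κ * ε ^ 2 * u) := by
  set N := (C + 1) ^ (d + 1)
  have : 0 < N := by positivity
  refine ⟨4 * (l + G * N) + N / κ, by positivity, fun ε hε0 hε1 => ?_⟩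
  set A := 4 * (l + G * N) + N / κ
  set y := (ε ^ 2)⁻¹
  have hεy : ε ^ 2 * y = 1 := mul_inv_cancel₀ (by positivity)
  have hy1 : 1 ≤ y := (one_le_inv₀ (by positivity)).2 (pow_le_one₀ hε0.le hε1)
  have hn : (⌈C * y⌉₊ : ℝ) ^ (d + 1) ≤ N * y ^ (d + 1) := by
    rw [← mul_pow]
    gcongr
    linarith [Nat.ceil_lt_add_one (by positivity : 0 ≤ C * y)]
  refine ⟨⌈C * y⌉₊, (Nat.ceil_pos.2 (by positivity)).ne', ?_, fun u s hu hus => ?_⟩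
  · calc C = C * y * ε ^ 2 := by rw [mul_assoc, mul_comm y, hεy, mul_one]
      _ ≤ ⌈C * y⌉₊ * ε ^ 2 := by gcongr; exact Nat.le_ceil _
  have hgain : ε ^ 2 * u + A * y ^ (d + 1) ≤ ε ^ 2 * s := by
    calc ε ^ 2 * u + A * y ^ (d + 1) = ε ^ 2 * (u + A * y ^ (d + 2)) := by
          linear_combination (-(A * y ^ (d + 1))) * hεy
      _ ≤ ε ^ 2 * s := by gcongr
  constructor
  · have hcost : 4 * (l + G * N) * y ^ (d + 1) ≤ ε ^ 2 * s := by
      have : 0 ≤ N / κ * y ^ (d + 1) := by positivity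
      have : 0 ≤ ε ^ 2 * u := by positivity
      linarith [add_mul (4 * (l + G * N)) (N / κ) (y ^ (d + 1))]
    have := mul_le_mul_of_nonneg_left hn hG
    linarith [le_mul_of_one_le_right hl (one_le_pow₀ hy1 : 1 ≤ y ^ (d + 1))]
  · have hcost : ε ^ 2 * u + N / κ * y ^ (d + 1) ≤ ε ^ 2 * s := by
      have : 0 ≤ 4 * (l + G * N) * y ^ (d + 1) := by positivity
      linarith [add_mul (4 * (l + G * N)) (N / κ) (y ^ (d + 1))]
    have hκcost := mul_le_mul_of_nonneg_left hcost hκ.le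
    rw [mul_add, ← mul_assoc κ (N / κ), mul_div_cancel₀ N hκ.ne'] at hκcost
    linarith

theorem exists_forall_measure_ULR_add_lt_le (d : ℕ) (hB : 1 < B) :
    ∃ E, IsEstimatorSeq d E ∧ ∃ κ > 0, ∀ α, 0 < α → α ≤ 1 → ∃ A > 0, ∀ p, IsBoxLipDensity B p →
      ∀ μ : Measure (Seq d), IsIIDLaw d μ (densityLaw p) → 0 < dHLC d (densityLaw p) →
      ∀ i : ℕ, μ {ω | ULR d E (i + (d + 1 + ⌈A * (dHLC d (densityLaw p) ^ 2)⁻¹ ^ (d + 2)⌉₊)) ω <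
        1 / α} ≤ ENNReal.ofReal ((2 ^ d + 1) *
          Real.exp (-(κ * dHLC d (densityLaw p) ^ 2 * i))) := by
  obtain ⟨E, hE, C, hC, κ, hκ, htail⟩ := exists_forall_measure_ULR_lt_le d hB
  refine ⟨E, hE, κ, hκ, fun α hα0 hα1 => ?_⟩
  obtain ⟨A, hA, hgrid⟩ := exists_grid_size d hC hκ (by linarith : 0 ≤ B + 1)
    (Real.log_nonneg (one_le_one_div hα0 hα1))
  refine ⟨A, hA, fun p hp μ hμ hε i => ?_⟩
  obtain ⟨n, hn, hCn, hcost⟩ := hgrid _ hε hp.dHLC_le_one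
  set ε := dHLC d (densityLaw p)
  set t := i + (d + 1 + ⌈A * (ε ^ 2)⁻¹ ^ (d + 2)⌉₊)
  have hsamples : (i : ℝ) + A * (ε ^ 2)⁻¹ ^ (d + 2) ≤ (t - d : ℕ) := by
    have : i + ⌈A * (ε ^ 2)⁻¹ ^ (d + 2)⌉₊ ≤ t - d := by omega
    calc _ ≤ ((i + ⌈A * (ε ^ 2)⁻¹ ^ (d + 2)⌉₊ : ℕ) : ℝ) := by
          push_cast
          gcongr
          exact Nat.le_ceil _
      _ ≤ (t - d : ℕ) := by gcongr
  have : NeZero n := ⟨hn⟩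
  obtain ⟨hthreshold, hexponent⟩ := hcost i _ i.cast_nonneg hsamples
  refine (htail p hp μ hμ n hCn α t hα0 (by omega) hthreshold).trans ?_
  gcongr

theorem tsum_ofReal_mul_exp_neg_le {K : ℝ} (hK : 0 ≤ K) (ha : 0 < a) :
    ∑' i : ℕ, ENNReal.ofReal (K * Real.exp (-(a * i))) ≤ ENNReal.ofReal (K * (1 + 1 / a)) := by
  have hexp : Real.exp (-a) ≤ 1 / (1 + a) := by
    rw [Real.exp_neg, ← one_div]
    exact one_div_le_one_div_of_le (by positivity) (by linarith [Real.add_one_le_exp a])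
  have hgap : a / (1 + a) ≤ 1 - Real.exp (-a) := by
    linarith [show a / (1 + a) = 1 - 1 / (1 + a) by field_simp; ring]
  calc _ = ∑' i : ℕ, ENNReal.ofReal K * ENNReal.ofReal (Real.exp (-a)) ^ i := by
        refine tsum_congr fun i => ?_
        rw [ENNReal.ofReal_mul hK, ← ENNReal.ofReal_pow (Real.exp_pos _).le,
          ← Real.exp_nat_mul, mul_neg, mul_comm a]
    _ = ENNReal.ofReal (K * (1 - Real.exp (-a))⁻¹) := by
        rw [ENNReal.tsum_mul_left, ENNReal.tsum_geometric, ENNReal.ofReal_mul hK,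
          ENNReal.ofReal_inv_of_pos (lt_of_lt_of_le (by positivity) hgap),
          ENNReal.ofReal_sub _ (Real.exp_pos _).le, ENNReal.ofReal_one]
    _ ≤ ENNReal.ofReal (K * (1 + 1 / a)) := by
        gcongr
        refine (inv_anti₀ (by positivity) hgap).trans_eq ?_
        rw [inv_div, add_div, div_self ha.ne', add_comm]

theorem tsum_le_of_exp_tail {f : ℕ → ENNReal} (hf : ∀ t, f t ≤ 1) {T : ℕ} {K : ℝ} (hK : 0 ≤ K)
    (ha : 0 < a) (htail : ∀ i, f (i + T) ≤ ENNReal.ofReal (K * Real.exp (-(a * i)))) :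
    ∑' t, f t ≤ ENNReal.ofReal (T + K * (1 + 1 / a)) := by
  have hhead : ∑ i ∈ Finset.range T, f i ≤ ENNReal.ofReal T := by
    simpa using Finset.sum_le_sum fun i (_ : i ∈ Finset.range T) => hf i
  rw [ENNReal.ofReal_add T.cast_nonneg (by positivity),
    ← Summable.sum_add_tsum_nat_add' (f := f) (k := T) ENNReal.summable]
  exact add_le_add hhead ((ENNReal.tsum_le_tsum htail).trans (tsum_ofReal_mul_exp_neg_le hK ha))

theorem exists_forall_tsum_measure_le (d : ℕ) (hB : 1 < B) :
    ∃ E, IsEstimatorSeq d E ∧ ∀ α, 0 < α → α ≤ 1 → ∃ C > 0, ∀ p, IsBoxLipDensity B p →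
      0 < dHLC d (densityLaw p) → ∀ μ : Measure (Seq d), IsIIDLaw d μ (densityLaw p) →
        ∑' t : ℕ, μ {ω | ∀ s ≤ t, ULR d E s ω < 1 / α} ≤
          ENNReal.ofReal (C * (dHLC d (densityLaw p) ^ 2)⁻¹ ^ (d + 2)) := by
  obtain ⟨E, hE, κ, hκ, htail⟩ := exists_forall_measure_ULR_add_lt_le d hB
  refine ⟨E, hE, fun α hα0 hα1 => ?_⟩
  obtain ⟨A, hA, htail⟩ := htail α hα0 hα1
  set K : ℝ := 2 ^ d + 1
  refine ⟨A + d + 2 + K * (1 + 1 / κ), by positivity, fun p hp hε μ hμ => ?_⟩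
  have := hμ.1
  set ε := dHLC d (densityLaw p)
  set y := (ε ^ 2)⁻¹ with hy
  have hy1 : 1 ≤ y := (one_le_inv₀ (by positivity)).2 (pow_le_one₀ hε.le hp.dHLC_le_one)
  have hlast (t : ℕ) : μ {ω | ∀ s ≤ t, ULR d E s ω < 1 / α} ≤ μ {ω | ULR d E t ω < 1 / α} :=
    measure_mono fun ω hω => hω t le_rfl
  set T := d + 1 + ⌈A * y ^ (d + 2)⌉₊ with hT
  refine (tsum_le_of_exp_tail (fun t => prob_le_one) (by positivity) (by positivity)
    fun i => (hlast (i + T)).trans (htail p hp μ hμ hε i)).trans (ENNReal.ofReal_le_ofReal ?_)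
  have hceil := Nat.ceil_lt_add_one (by positivity : 0 ≤ A * y ^ (d + 2))
  have hκy : 1 / (κ * ε ^ 2) = 1 / κ * y := by rw [hy, one_div, mul_inv, one_div]
  rw [hκy, hT]
  push_cast
  calc _ ≤ A * y ^ (d + 2) + (d + 2) * 1 + K * (1 + 1 / κ * y) := by linarith
    _ ≤ A * y ^ (d + 2) + (d + 2) * y ^ (d + 2) +
        K * (y ^ (d + 2) + 1 / κ * y ^ (d + 2)) := by
      gcongr
      · exact one_le_pow₀ hy1
      · exact one_le_pow₀ hy1
      · exact le_self_pow₀ hy1 (by omega)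
    _ = _ := by ring

end RejectionTime

end

theorem statement18_general {B : ℝ} (hB : 1 < B) :
    ∃ E, IsEstimatorSeq d E ∧ ∀ α, 0 < α → α ≤ 1 → ∃ C > 0, ∀ P ∈ DBoxLip d B, 0 < dHLC d P →
      ∀ μ : Measure (Seq d), IsIIDLaw d μ P →
        ∑' t : ℕ, μ {ω | ∀ s ≤ t, ULR d E s ω < 1 / α} ≤
          ENNReal.ofReal (C * dHLC d P ^ (-(2 * ((d : ℝ) + 2)))) := by
  obtain ⟨E, hE, hbound⟩ := exists_forall_tsum_measure_le d hB
  refine ⟨E, hE, fun α hα0 hα1 => ?_⟩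
  obtain ⟨C, hC, hbound⟩ := hbound α hα0 hα1
  refine ⟨C, hC, fun P hP hε μ hμ => ?_⟩
  obtain ⟨p, hp, rfl⟩ := exists_isBoxLipDensity_of_mem_DBoxLip (by linarith) hP
  have hrpow (ε : ℝ) (hε : 0 < ε) : ε ^ (-(2 * ((d : ℝ) + 2))) = (ε ^ 2)⁻¹ ^ (d + 2) := by
    rw [inv_pow, ← pow_mul, Real.rpow_neg hε.le, ← Real.rpow_natCast]
    push_cast
    rfl
  rw [hrpow _ hε]
  exact hbound p hp hε μ hμ

/-- For the box–Lipschitz–bounded class, there is an estimator sequence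
such that the expected ULR rejection time is `Õ(d_H(p,𝓛)^{−2(d+3)})`; the expectation
`E[τ_α]` is written as `∑_t P^∞(τ_α > t)`. -/
theorem statement18 (hd : 0 < d) (B : ℝ) (hB : 1 < B)
    (α : ℝ) (hα0 : 0 < α) (hα1 : α ≤ 1) :
    ∃ (E : (t : ℕ) → (Fin t → RV d) → RV d → ℝ) (C : ℝ) (k : ℕ),
      IsEstimatorSeq d E ∧ 0 < C ∧
      ∀ P ∈ DBoxLip d B, P ∉ logConcaveLaws d → 0 < dHLC d P →
        ∀ μ : Measure (Seq d), IsIIDLaw d μ P →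
          ∑' t : ℕ, μ {ω | ∀ s ≤ t, ULR d E s ω < 1 / α} ≤
            ENNReal.ofReal (C * dHLC d P ^ (-(2 * ((d : ℝ) + 3))) *
              (1 + Real.log (1 / dHLC d P)) ^ k) := by
  obtain ⟨E, hE, hbound⟩ := statement18_general d hB
  obtain ⟨C, hC, hbound⟩ := hbound α hα0 hα1
  refine ⟨E, C, 0, hE, hC, fun P hP _ hε μ hμ => (hbound P hP hε μ hμ).trans ?_⟩
  obtain ⟨p, hp, rfl⟩ := exists_isBoxLipDensity_of_mem_DBoxLip (by linarith) hP
  rw [pow_zero, mul_one]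
  gcongr ENNReal.ofReal (C * ?_)
  exact Real.rpow_le_rpow_of_exponent_ge hε hp.dHLC_le_one (by linarith)

end SeqTest
end
end

section
/- Fix B > 1 and let 𝒟_{Box,Lip,B} be the set of laws on ℝ^d whose densities are 1-Lipschitz, supported on [−1,1]^d, and take values in [1/B, B]. There exists an estimator sequence 𝓔 such that for every P ∈ 𝒟_{Box,Lip,B}, the prediction regret satisfies ρ_t(𝓔;p)/t → 0 P^∞-almost surely as t → ∞; consequently, for every c > 0, 𝒟_{Box,Lip,B} ⊆ 𝒬(𝓔; c), i.e., for every non-log-concave P ∈ 𝒟_{Box,Lip,B} with log-concave KL-projection L*, P^∞( limsup_{t→∞} ρ_t(𝓔;p)/(t·d_H²(p, L*)) ≤ c ) = 1. -/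
/-!
Predict with the Bayesian mixture `∑ₖ wₖ qₖ^⊗` of the i.i.d. laws with densities `qₖ`, where `qₖ`
runs through a countable family. The log-losses of the predictive densities telescope, so the
regret against a density `p` is `-log Rₜ`, with `Rₜ` the likelihood ratio of the mixture against
`p^⊗`. Under `p^⊗` the expectation of `Rₜ` is at most `1`, hence `Rₜ ≤ rᵗ` eventually for each
`r > 1` by Markov and Borel–Cantelli; conversely `Rₜ ≥ wₖ r⁻ᵗ` as soon as `p ≤ r qₖ`. So it is
enough to dominate each `p` by some member of the family, up to a factor arbitrarily close to `1`.
For continuous densities on a compact set, take a uniformly dense sequence of them and mix each with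
a small multiple of one positive density `g`: since `g` is bounded below on the compact set, a
uniform error is absorbed by that multiple.
-/

open MeasureTheory ProbabilityTheory Filter Finset Matrix
open scoped Classical

noncomputable section

namespace SeqTest

variable (d : ℕ)


section Mixture

open scoped ENNReal NNReal

variable {ι α : Type*} {w : ι → ℝ≥0∞} {q : ι → α → ℝ≥0∞} {t : ℕ}

/-- The likelihood `∑ₖ wₖ ∏ᵢ qₖ(hᵢ)` of the sample `h` under the mixture with prior weights `w` of
the i.i.d. laws with densities `q`. -/
def mixLik (w : ι → ℝ≥0∞) (q : ι → α → ℝ≥0∞) (h : Fin t → α) : ℝ≥0∞ :=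
  ∑' k, w k * ∏ i, q k (h i)

/-- The Bayesian predictive density at `x`, given the sample `h`, of the mixture with prior weights
`w` of the i.i.d. laws with densities `q`. -/
def mixPredict (w : ι → ℝ≥0∞) (q : ι → α → ℝ≥0∞) (t : ℕ) (h : Fin t → α) (x : α) : ℝ :=
  (mixLik w q (Fin.snoc h x : Fin (t + 1) → α)).toReal / (mixLik w q h).toReal

lemma mixLik_snoc (h : Fin t → α) (x : α) :
    mixLik w q (Fin.snoc h x : Fin (t + 1) → α) = ∑' k, w k * ((∏ i, q k (h i)) * q k x) := by
  simp only [mixLik, Fin.prod_univ_castSucc, Fin.snoc_castSucc, Fin.snoc_last]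

lemma mixLik_path_succ (ω : ℕ → α) (t : ℕ) :
    mixLik w q (Fin.snoc (fun i : Fin t => ω i) (ω t) : Fin (t + 1) → α) =
      mixLik w q fun i : Fin (t + 1) => ω i := by
  rw [mixLik_snoc]
  simp only [mixLik, Fin.prod_univ_castSucc, Fin.val_castSucc, Fin.val_last]

lemma mixLik_fin_zero (h : Fin 0 → α) : mixLik w q h = ∑' k, w k := by
  simp only [mixLik, Finset.univ_eq_empty, Finset.prod_empty, mul_one]

lemma mul_pow_le_mixLik {k : ι} {c : ℝ≥0∞} {h : Fin t → α} (hc : ∀ i, c ≤ q k (h i)) :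
    w k * c ^ t ≤ mixLik w q h := by
  calc w k * c ^ t = w k * ∏ _i : Fin t, c := by simp
    _ ≤ w k * ∏ i, q k (h i) := by gcongr with i; exact hc i
    _ ≤ mixLik w q h := ENNReal.le_tsum k

lemma mixLik_ne_zero [Nonempty ι] (hw : ∀ k, w k ≠ 0) (hq : ∀ k x, q k x ≠ 0) (h : Fin t → α) :
    mixLik w q h ≠ 0 := by
  simpa [mixLik, Finset.prod_eq_zero_iff, hw] using ⟨Classical.arbitrary ι, fun i => hq _ (h i)⟩

lemma mixLik_ne_top {C : ι → ℝ≥0∞} (hq : ∀ k x, q k x ≤ C k) (hC : ∑' k, w k * C k ^ t ≠ ∞)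
    (h : Fin t → α) : mixLik w q h ≠ ∞ := by
  refine ne_top_of_le_ne_top hC (ENNReal.tsum_le_tsum fun k => ?_)
  calc w k * ∏ i, q k (h i) ≤ w k * ∏ _i : Fin t, C k := by gcongr with i; exact hq k _
    _ = w k * C k ^ t := by simp

lemma mixLik_eq_mixLik_div_mul {p : α → ℝ≥0∞} {h : Fin t → α} (hp0 : ∀ i, p (h i) ≠ 0)
    (hptop : ∀ i, p (h i) ≠ ∞) :
    mixLik w q h = mixLik w (fun k => q k / p) h * ∏ i, p (h i) := by
  simp only [mixLik, ← ENNReal.tsum_mul_right, mul_assoc, ← Finset.prod_mul_distrib, Pi.div_apply,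
    ENNReal.div_mul_cancel (hp0 _) (hptop _)]

lemma sum_log_mixPredict (hw : ∑' k, w k = 1)
    (hpos : ∀ (t : ℕ) (h : Fin t → α), 0 < (mixLik w q h).toReal) (ω : ℕ → α) (t : ℕ) :
    ∑ j ∈ Finset.range t, Real.log (mixPredict w q j (fun i => ω i) (ω j)) =
      Real.log (mixLik w q fun i : Fin t => ω i).toReal := by
  simp_rw [mixPredict, mixLik_path_succ, Real.log_div (hpos _ _).ne' (hpos _ _).ne']
  rw [Finset.sum_range_sub fun j => Real.log (mixLik w q fun i : Fin j => ω i).toReal]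
  simp [mixLik_fin_zero, hw]

lemma sum_log_sub_log_mixPredict (hw : ∑' k, w k = 1)
    (hpos : ∀ (t : ℕ) (h : Fin t → α), 0 < (mixLik w q h).toReal) {p : α → ℝ≥0∞} {ω : ℕ → α}
    (hp0 : ∀ j, p (ω j) ≠ 0) (hptop : ∀ j, p (ω j) ≠ ∞) (t : ℕ) :
    ∑ j ∈ Finset.range t,
        (Real.log (p (ω j)).toReal - Real.log (mixPredict w q j (fun i => ω i) (ω j))) =
      -Real.log (mixLik w (fun k => q k / p) fun i : Fin t => ω i).toReal := by
  have hp : ∀ j, (p (ω j)).toReal ≠ 0 := fun j => ENNReal.toReal_ne_zero.2 ⟨hp0 j, hptop j⟩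
  have hprod : (mixLik w q fun i : Fin t => ω i).toReal =
      (mixLik w (fun k => q k / p) fun i : Fin t => ω i).toReal *
        ∏ j ∈ Finset.range t, (p (ω j)).toReal := by
    rw [mixLik_eq_mixLik_div_mul (fun i => hp0 i) fun i => hptop i, ENNReal.toReal_mul,
      ENNReal.toReal_prod, Fin.prod_univ_eq_prod_range fun j => (p (ω j)).toReal]
  have hratio : (mixLik w (fun k => q k / p) fun i : Fin t => ω i).toReal ≠ 0 :=
    left_ne_zero_of_mul (hprod ▸ (hpos t _).ne')
  rw [Finset.sum_sub_distrib, sum_log_mixPredict hw hpos, hprod,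
    Real.log_mul hratio (Finset.prod_ne_zero_iff.2 fun j _ => hp j), Real.log_prod fun j _ => hp j]
  ring

lemma exists_weights_tsum_mul_pow_ne_top [Countable ι] [Nonempty ι] {C : ι → ℝ≥0∞}
    (hC : ∀ k, C k ≠ ∞) :
    ∃ w : ι → ℝ≥0∞, (∀ k, w k ≠ 0) ∧ ∑' k, w k = 1 ∧ ∀ t : ℕ, ∑' k, w k * C k ^ t ≠ ∞ := by
  obtain ⟨v, hv, hvsum⟩ := ENNReal.exists_pos_sum_of_countable one_ne_zero ι
  -- The factor `exp (-C)` beats every power of `C`.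
  let u : ι → ℝ≥0∞ := fun k => v k * ENNReal.ofReal (Real.exp (-(C k).toReal))
  have hu0 : ∀ k, u k ≠ 0 := fun k => mul_ne_zero (by simpa using (hv k).ne')
    (ENNReal.ofReal_pos.2 (Real.exp_pos _)).ne'
  have hupow : ∀ (t : ℕ) k, u k * C k ^ t ≤ v k * (t.factorial : ℝ≥0∞) := fun t k => by
    have hle : Real.exp (-(C k).toReal) * (C k).toReal ^ t ≤ t.factorial := by
      rw [Real.exp_neg, inv_mul_le_iff₀ (Real.exp_pos _), ← div_le_iff₀ (by positivity)]
      exact Real.pow_div_factorial_le_exp _ ENNReal.toReal_nonneg t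
    rw [mul_assoc]
    gcongr
    rw [← ENNReal.ofReal_toReal (hC k), ENNReal.toReal_ofReal ENNReal.toReal_nonneg,
      ← ENNReal.ofReal_pow ENNReal.toReal_nonneg, ← ENNReal.ofReal_mul (Real.exp_pos _).le,
      ← ENNReal.ofReal_natCast]
    exact ENNReal.ofReal_le_ofReal hle
  have hupow_sum : ∀ t : ℕ, ∑' k, u k * C k ^ t ≠ ∞ := fun t => by
    refine ne_top_of_le_ne_top ?_ (ENNReal.tsum_le_tsum (hupow t))
    rw [ENNReal.tsum_mul_right]
    exact ENNReal.mul_ne_top hvsum.ne_top (ENNReal.natCast_ne_top _)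
  have hmass0 : ∑' k, u k ≠ 0 := fun h =>
    hu0 (Classical.arbitrary ι) (ENNReal.tsum_eq_zero.1 h _)
  have hmass : ∑' k, u k ≠ ∞ := by simpa using hupow_sum 0
  refine ⟨fun k => (∑' k, u k)⁻¹ * u k, fun k => mul_ne_zero (ENNReal.inv_ne_zero.2 hmass) (hu0 k),
    ?_, fun t => ?_⟩
  · rw [ENNReal.tsum_mul_left, ENNReal.inv_mul_cancel hmass0 hmass]
  · simp_rw [mul_assoc]
    rw [ENNReal.tsum_mul_left]
    exact ENNReal.mul_ne_top (ENNReal.inv_ne_top.2 hmass0) (hupow_sum t)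

variable [MeasurableSpace α] [Countable ι]

lemma measurable_mixLik (hq : ∀ k, Measurable (q k)) :
    Measurable fun h : Fin t → α => mixLik w q h :=
  Measurable.tsum fun k => (Finset.measurable_prod _ fun i _ =>
    (hq k).comp (measurable_pi_apply i)).const_mul _

lemma measurable_mixLik_snoc (hq : ∀ k, Measurable (q k)) :
    Measurable fun z : (Fin t → α) × α => mixLik w q (Fin.snoc z.1 z.2 : Fin (t + 1) → α) := by
  simp only [mixLik_snoc]
  refine Measurable.tsum fun k => (Measurable.mul ?_ ((hq k).comp measurable_snd)).const_mul _
  exact Finset.measurable_prod _ fun i _ =>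
    (hq k).comp ((measurable_pi_apply i).comp measurable_fst)

lemma lintegral_mixLik_snoc {ν : Measure α} (hq : ∀ k, Measurable (q k))
    (hint : ∀ k, ∫⁻ x, q k x ∂ν = 1) (h : Fin t → α) :
    ∫⁻ x, mixLik w q (Fin.snoc h x : Fin (t + 1) → α) ∂ν = mixLik w q h := by
  simp_rw [mixLik_snoc]
  rw [mixLik, lintegral_tsum fun k => (((hq k).const_mul _).const_mul _).aemeasurable]
  refine tsum_congr fun k => ?_
  rw [lintegral_const_mul _ ((hq k).const_mul _), lintegral_const_mul _ (hq k), hint, mul_one]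

lemma lintegral_pi_mixLik {P : Measure α} [IsProbabilityMeasure P] (hq : ∀ k, Measurable (q k)) :
    ∫⁻ h : Fin t → α, mixLik w q h ∂Measure.pi (fun _ => P) =
      ∑' k, w k * (∫⁻ x, q k x ∂P) ^ t := by
  have hqi : ∀ k (i : Fin t), Measurable fun h : Fin t → α => q k (h i) := fun k i =>
    (hq k).comp (measurable_pi_apply i)
  have hprod : ∀ k, Measurable fun h : Fin t → α => ∏ i, q k (h i) := fun k =>
    Finset.measurable_prod _ fun i _ => hqi k i
  simp only [mixLik]
  rw [lintegral_tsum fun k => ((hprod k).const_mul _).aemeasurable]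
  refine tsum_congr fun k => ?_
  have hindep : iIndepFun (fun (i : Fin t) (h : Fin t → α) => q k (h i))
      (Measure.pi fun _ => P) := iIndepFun_pi (X := fun _ => q k) fun _ => (hq k).aemeasurable
  have hmarginal : ∀ i : Fin t,
      ∫⁻ h, q k (h i) ∂Measure.pi (fun _ : Fin t => P) = ∫⁻ x, q k x ∂P := fun i =>
    (measurePreserving_eval (fun _ : Fin t => P) i).lintegral_comp (hq k)
  rw [lintegral_const_mul _ (hprod k),
    lintegral_prod_eq_prod_lintegral_of_indepFun _ _ hindep (hqi k)]
  simp [hmarginal]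

end Mixture

section LikelihoodRatio

open scoped ENNReal NNReal

variable {α : Type*} [MeasurableSpace α]

lemma lintegral_div_withDensity_le {ν : Measure α} {p q : α → ℝ≥0∞} (hp : Measurable p)
    (hq : Measurable q) : ∫⁻ x, (q / p) x ∂ν.withDensity p ≤ ∫⁻ x, q x ∂ν := by
  rw [lintegral_withDensity_eq_lintegral_mul _ hp (hq.div hp)]
  exact lintegral_mono fun x => ENNReal.mul_div_le

lemma ae_eventually_le_pow {μ : Measure α} {R : ℕ → α → ℝ≥0∞} (hR : ∀ t, Measurable (R t))
    (hint : ∀ t, ∫⁻ ω, R t ω ∂μ ≤ 1) {r : ℝ≥0} (hr : 1 < r) :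
    ∀ᵐ ω ∂μ, ∀ᶠ t in atTop, R t ω ≤ (r : ℝ≥0∞) ^ t := by
  have hr0 : (r : ℝ≥0∞) ≠ 0 := by exact_mod_cast (zero_lt_one.trans hr).ne'
  have hmarkov : ∀ t, μ {ω | (r : ℝ≥0∞) ^ t ≤ R t ω} ≤ (r : ℝ≥0∞)⁻¹ ^ t := fun t => by
    calc μ {ω | (r : ℝ≥0∞) ^ t ≤ R t ω} ≤ (∫⁻ ω, R t ω ∂μ) / (r : ℝ≥0∞) ^ t :=
          meas_ge_le_lintegral_div (hR t).aemeasurable (pow_ne_zero t hr0)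
            (ENNReal.pow_ne_top ENNReal.coe_ne_top)
      _ ≤ 1 / (r : ℝ≥0∞) ^ t := by gcongr; exact hint t
      _ = (r : ℝ≥0∞)⁻¹ ^ t := by rw [one_div, ENNReal.inv_pow]
  have hgeom : ∑' t : ℕ, (r : ℝ≥0∞)⁻¹ ^ t ≠ ∞ :=
    (tsum_geometric_lt_top.2 (ENNReal.inv_lt_one.2 (by exact_mod_cast hr))).ne
  filter_upwards [ae_eventually_notMem
    (ne_top_of_le_ne_top hgeom (ENNReal.tsum_le_tsum hmarkov))] with ω hω
  filter_upwards [hω] with t ht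
  exact (not_le.1 ht).le

lemma tendsto_log_toReal_div_zero {R : ℕ → ℝ≥0∞}
    (hlower : ∀ r : ℝ≥0, 1 < r → ∃ c : ℝ≥0∞, c ≠ 0 ∧ ∀ t, c ≤ (r : ℝ≥0∞) ^ t * R t)
    (hupper : ∀ r : ℝ≥0, 1 < r → ∀ᶠ t in atTop, R t ≤ (r : ℝ≥0∞) ^ t) :
    Tendsto (fun t : ℕ => Real.log (R t).toReal / t) atTop (nhds 0) := by
  rw [Metric.tendsto_nhds]
  intro ε hε
  obtain ⟨r, hr1, hr⟩ : ∃ r : ℝ≥0, 1 < r ∧ Real.log r = ε / 2 :=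
    ⟨(Real.exp (ε / 2)).toNNReal, by simpa using half_pos hε, by
      rw [Real.coe_toNNReal _ (Real.exp_pos _).le, Real.log_exp]⟩
  obtain ⟨c, hc0, hc⟩ := hlower r hr1
  have hr0 : (r : ℝ) ≠ 0 := by exact_mod_cast (zero_lt_one.trans hr1).ne'
  have hsmall := (tendsto_const_div_atTop_nhds_zero_nat (Real.log c.toReal)).eventually
    (lt_mem_nhds (show -(ε / 2) < 0 by linarith))
  filter_upwards [hupper r hr1, hsmall, eventually_gt_atTop 0] with t hle hsmall ht
  have ht' : (0 : ℝ) < t := by exact_mod_cast ht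
  have hRtop : R t ≠ ∞ := ne_top_of_le_ne_top (by finiteness) hle
  have hctop : c ≠ ∞ := ne_top_of_le_ne_top (by finiteness) (hc t)
  have hcpos : 0 < c.toReal := ENNReal.toReal_pos hc0 hctop
  have hupper_real : (R t).toReal ≤ (r : ℝ) ^ t := by
    simpa using ENNReal.toReal_mono (by finiteness) hle
  have hlower_real : c.toReal ≤ (r : ℝ) ^ t * (R t).toReal := by
    simpa using ENNReal.toReal_mono (by finiteness) (hc t)
  have hRpos : 0 < (R t).toReal :=
    pos_of_mul_pos_right (hcpos.trans_le hlower_real) (by positivity)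
  have hlog_upper := Real.log_le_log hRpos hupper_real
  have hlog_lower := Real.log_le_log hcpos hlower_real
  rw [Real.log_pow, hr] at hlog_upper
  rw [Real.log_mul (pow_ne_zero t hr0) hRpos.ne', Real.log_pow, hr] at hlog_lower
  rw [Real.dist_0_eq_abs, abs_lt, lt_div_iff₀ ht', div_lt_iff₀ ht']
  rw [lt_div_iff₀ ht'] at hsmall
  have hεt : 0 < ε * t := mul_pos hε ht'
  constructor <;> linarith

end LikelihoodRatio

section MixtureEstimator

open scoped ENNReal NNReal

/-- `q` is a strictly positive, bounded probability density with respect to `ν`: the components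
from which mixture estimators are built. -/
structure IsBoundedPosDensity {α : Type*} [MeasurableSpace α] (ν : Measure α) (q : α → ℝ≥0∞) :
    Prop where
  measurable : Measurable q
  ne_zero : ∀ x, q x ≠ 0
  lintegral_eq_one : ∫⁻ x, q x ∂ν = 1
  bounded : ∃ C : ℝ≥0∞, C ≠ ∞ ∧ ∀ x, q x ≤ C

variable {d}

lemma measurable_prefixMap (t : ℕ) : Measurable (prefixMap d t) :=
  measurable_pi_lambda _ fun s => measurable_pi_apply (s : ℕ)

lemma IsIIDLaw.prefixLaw_eq {μ : Measure (Seq d)} {P : Measure (RV d)} [IsProbabilityMeasure P]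
    (h : IsIIDLaw d μ P) (t : ℕ) : prefixLaw d μ t = Measure.pi fun _ => P :=
  (Measure.pi_eq (h.2 t)).symm

lemma IsIIDLaw.measurePreserving {μ : Measure (Seq d)} {P : Measure (RV d)}
    [IsProbabilityMeasure P] (h : IsIIDLaw d μ P) (j : ℕ) :
    MeasurePreserving (fun ω : Seq d => ω j) μ P :=
  (measurePreserving_eval (fun _ : Fin (j + 1) => P) (Fin.last j)).comp
    ⟨measurable_prefixMap (j + 1), h.prefixLaw_eq (j + 1)⟩

variable {ι : Type*} [Countable ι] {w : ι → ℝ≥0∞} {q : ι → RV d → ℝ≥0∞}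

lemma isEstimatorSeq_mixPredict (hq : ∀ k, Measurable (q k)) (hint : ∀ k, ∫⁻ x, q k x = 1)
    (hpos : ∀ (t : ℕ) (h : Fin t → RV d), 0 < (mixLik w q h).toReal) :
    IsEstimatorSeq d (mixPredict w q) := by
  refine ⟨fun t => ?_, fun t h x => div_pos (hpos _ _) (hpos _ _), fun t h => ?_⟩
  · exact (measurable_mixLik_snoc hq).ennreal_toReal.div
      ((measurable_mixLik hq).ennreal_toReal.comp measurable_fst)
  · simp only [mixPredict]
    rw [integral_div, integral_toReal, lintegral_mixLik_snoc hq hint, div_self (hpos t h).ne']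
    · exact ((measurable_mixLik_snoc hq).comp measurable_prodMk_left).aemeasurable
    · exact ae_of_all _ fun x => (ENNReal.toReal_pos_iff.1 (hpos _ _)).2

lemma ae_eventually_mixLik_div_le_pow (hw : ∑' k, w k = 1) (hq : ∀ k, Measurable (q k))
    {ν : Measure (RV d)} (hint : ∀ k, ∫⁻ x, q k x ∂ν = 1) {p : RV d → ℝ≥0∞} (hp : Measurable p)
    [IsProbabilityMeasure (ν.withDensity p)] {μ : Measure (Seq d)}
    (hμ : IsIIDLaw d μ (ν.withDensity p)) {r : ℝ≥0} (hr : 1 < r) :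
    ∀ᵐ ω ∂μ, ∀ᶠ t : ℕ in atTop,
      mixLik w (fun k => q k / p) (fun i : Fin t => ω i) ≤ (r : ℝ≥0∞) ^ t := by
  have hratio : ∀ k, Measurable (q k / p) := fun k => (hq k).div hp
  refine ae_eventually_le_pow (R := fun t ω => mixLik w (fun k => q k / p) (prefixMap d t ω))
    (fun t => (measurable_mixLik hratio).comp (measurable_prefixMap t)) (fun t => ?_) hr
  calc ∫⁻ ω, mixLik w (fun k => q k / p) (prefixMap d t ω) ∂μ
      = ∫⁻ h, mixLik w (fun k => q k / p) h ∂prefixLaw d μ t :=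
        (lintegral_map (measurable_mixLik hratio) (measurable_prefixMap t)).symm
    _ = ∑' k, w k * (∫⁻ x, (q k / p) x ∂ν.withDensity p) ^ t := by
        rw [hμ.prefixLaw_eq, lintegral_pi_mixLik hratio]
    _ ≤ ∑' k, w k := ENNReal.tsum_le_tsum fun k => mul_le_of_le_one_right' <|
        pow_le_one' ((lintegral_div_withDensity_le hp (hq k)).trans (hint k).le) t
    _ = 1 := hw

lemma ae_rnDeriv_withDensity_eq {α : Type*} [MeasurableSpace α] {ν : Measure α} [SigmaFinite ν]
    {p : α → ℝ≥0∞} (hp : Measurable p) :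
    ∀ᵐ x ∂ν.withDensity p, (ν.withDensity p).rnDeriv ν x = p x :=
  (withDensity_absolutelyContinuous ν p).ae_le (Measure.rnDeriv_withDensity ν hp)

lemma ae_withDensity_ne_zero {α : Type*} [MeasurableSpace α] {ν : Measure α}
    {p : α → ℝ≥0∞} (hp : Measurable p) : ∀ᵐ x ∂ν.withDensity p, p x ≠ 0 :=
  (ae_withDensity_iff hp).2 (ae_of_all _ fun _ hx => hx)

lemma ae_tendsto_regret_mixPredict (hw0 : ∀ k, w k ≠ 0) (hw : ∑' k, w k = 1)
    (hpos : ∀ (t : ℕ) (h : Fin t → RV d), 0 < (mixLik w q h).toReal)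
    (hq : ∀ k, Measurable (q k)) (hint : ∀ k, ∫⁻ x, q k x = 1) {p : RV d → ℝ≥0∞}
    (hp : Measurable p) (hptop : ∀ x, p x ≠ ∞) [IsProbabilityMeasure (volume.withDensity p)]
    (hdom : ∀ r : ℝ≥0, 1 < r → ∃ k, ∀ x, p x ≤ r * q k x) {μ : Measure (Seq d)}
    (hμ : IsIIDLaw d μ (volume.withDensity p)) :
    ∀ᵐ ω ∂μ, Tendsto
      (fun t : ℕ => regret d (volume.withDensity p) (mixPredict w q) t ω / t) atTop (nhds 0) := by
  have hpath : ∀ᵐ ω ∂μ, ∀ j, (volume.withDensity p).rnDeriv volume (ω j) = p (ω j) ∧ p (ω j) ≠ 0 :=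
    ae_all_iff.2 fun j => (hμ.measurePreserving j).quasiMeasurePreserving.ae
      ((ae_rnDeriv_withDensity_eq hp).and (ae_withDensity_ne_zero hp))
  have hupper : ∀ᵐ ω ∂μ, ∀ n : ℕ, ∀ᶠ t : ℕ in atTop, mixLik w (fun k => q k / p)
      (fun i : Fin t => ω i) ≤ ((1 + 1 / ((n : ℝ≥0) + 1) : ℝ≥0) : ℝ≥0∞) ^ t :=
    ae_all_iff.2 fun n => ae_eventually_mixLik_div_le_pow hw hq hint hp hμ
      (lt_add_of_pos_right 1 (by positivity))
  filter_upwards [hpath, hupper] with ω hω hupper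
  have hreg : ∀ t, regret d (volume.withDensity p) (mixPredict w q) t ω =
      -Real.log (mixLik w (fun k => q k / p) fun i : Fin t => ω i).toReal := fun t => by
    rw [← sum_log_sub_log_mixPredict hw hpos (fun j => (hω j).2) fun j => hptop (ω j)]
    simp only [regret, (hω _).1]
  simp only [hreg, neg_div]
  rw [← neg_zero]
  refine (tendsto_log_toReal_div_zero (fun r hr => ?_) fun r hr => ?_).neg
  · obtain ⟨k, hk⟩ := hdom r hr
    have hr0 : (r : ℝ≥0∞) ≠ 0 := by exact_mod_cast (zero_lt_one.trans hr).ne'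
    refine ⟨w k, hw0 k, fun t => ?_⟩
    have hlower : w k * (r : ℝ≥0∞)⁻¹ ^ t ≤
        mixLik w (fun k => q k / p) fun i : Fin t => ω i := mul_pow_le_mixLik fun i => by
      rw [Pi.div_apply, ENNReal.le_div_iff_mul_le (.inl (hω i).2) (.inl (hptop _)), mul_comm,
        ← div_eq_mul_inv]
      exact ENNReal.div_le_of_le_mul' (hk _)
    calc w k = (r : ℝ≥0∞) ^ t * (w k * (r : ℝ≥0∞)⁻¹ ^ t) := by
          rw [mul_left_comm, ← mul_pow, ENNReal.mul_inv_cancel hr0 ENNReal.coe_ne_top, one_pow,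
            mul_one]
      _ ≤ _ := by gcongr
  · obtain ⟨n, hn⟩ := exists_nat_one_div_lt (tsub_pos_of_lt hr)
    filter_upwards [hupper n] with t ht
    refine ht.trans ?_
    gcongr
    exact (lt_tsub_iff_left.1 hn).le

lemma exists_isEstimatorSeq_of_countable {Q : Set (RV d → ℝ≥0∞)} (hQ : Q.Countable)
    (hne : Q.Nonempty) (hdens : ∀ q ∈ Q, IsBoundedPosDensity volume q) :
    ∃ E, IsEstimatorSeq d E ∧ ∀ p : RV d → ℝ≥0∞, Measurable p →
      (∀ r : ℝ≥0, 1 < r → ∃ q ∈ Q, ∀ x, p x ≤ r * q x) →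
        IsProbabilityMeasure (volume.withDensity p) →
          ∀ μ : Measure (Seq d), IsIIDLaw d μ (volume.withDensity p) → ∀ᵐ ω ∂μ,
            Tendsto (fun t : ℕ => regret d (volume.withDensity p) E t ω / t) atTop (nhds 0) := by
  have : Countable Q := hQ
  have : Nonempty Q := hne.to_subtype
  choose C hCtop hC using fun q : Q => (hdens q q.2).bounded
  obtain ⟨w, hw0, hw, hwC⟩ := exists_weights_tsum_mul_pow_ne_top hCtop
  have hpos : ∀ (t : ℕ) (h : Fin t → RV d), 0 < (mixLik w Subtype.val h).toReal := fun t h =>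
    ENNReal.toReal_pos (mixLik_ne_zero hw0 (fun q => (hdens q q.2).ne_zero) h)
      (mixLik_ne_top hC (hwC t) h)
  have hmeas : ∀ q : Q, Measurable q.1 := fun q => (hdens q q.2).measurable
  have hint : ∀ q : Q, ∫⁻ x, q.1 x = 1 := fun q => (hdens q q.2).lintegral_eq_one
  refine ⟨mixPredict w Subtype.val, isEstimatorSeq_mixPredict hmeas hint hpos, ?_⟩
  intro p hp hdom _ μ hμ
  have hptop : ∀ x, p x ≠ ∞ := fun x => by
    obtain ⟨q, hq, hpq⟩ := hdom 2 one_lt_two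
    exact ne_top_of_le_ne_top (ENNReal.mul_ne_top ENNReal.coe_ne_top
      (ne_top_of_le_ne_top (hCtop ⟨q, hq⟩) (hC ⟨q, hq⟩ x))) (hpq x)
  refine ae_tendsto_regret_mixPredict hw0 hw hpos hmeas hint hp hptop (fun r hr => ?_) hμ
  obtain ⟨q, hq, hpq⟩ := hdom r hr
  exact ⟨⟨q, hq⟩, hpq⟩

end MixtureEstimator

section ContinuousDensities

open scoped ENNReal NNReal

variable {α : Type*}

/-- The mixture `(p + θ g) / (1 + θ)` of two densities. A small multiple of a positive `g` turns
uniform approximation of densities into domination up to a factor close to `1`. -/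
def smoothed (g : α → ℝ≥0∞) (θ : ℝ≥0) (p : α → ℝ≥0∞) (x : α) : ℝ≥0∞ :=
  (1 + θ : ℝ≥0∞)⁻¹ * (p x + θ * g x)

lemma le_mul_smoothed {g p p' : α → ℝ≥0∞} {θ r : ℝ≥0} (hr : 1 + θ ≤ r) {x : α}
    (h : p x ≤ p' x + θ * g x) : p x ≤ r * smoothed g θ p' x := by
  calc p x ≤ (1 + θ : ℝ≥0∞) * smoothed g θ p' x := by
        rw [smoothed, ← mul_assoc, ENNReal.mul_inv_cancel (by simp) (by finiteness), one_mul]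
        exact h
    _ ≤ r * smoothed g θ p' x := by
        gcongr
        exact_mod_cast hr

lemma IsBoundedPosDensity.smoothed [MeasurableSpace α] {ν : Measure α} {g p : α → ℝ≥0∞} {θ : ℝ≥0}
    (hg : IsBoundedPosDensity ν g) (hθ : θ ≠ 0) (hp : Measurable p) (hint : ∫⁻ x, p x ∂ν = 1)
    {C : ℝ≥0∞} (hC : C ≠ ∞) (hpC : ∀ x, p x ≤ C) : IsBoundedPosDensity ν (smoothed g θ p) where
  measurable := (hp.add (hg.measurable.const_mul _)).const_mul _
  ne_zero x := by simp [SeqTest.smoothed, hθ, hg.ne_zero x]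
  lintegral_eq_one := by
    have hsum : Measurable fun x => p x + θ * g x := hp.add (hg.measurable.const_mul _)
    simp only [SeqTest.smoothed]
    rw [lintegral_const_mul _ hsum, lintegral_add_left hp,
      lintegral_const_mul _ hg.measurable, hint, hg.lintegral_eq_one, mul_one,
      ENNReal.inv_mul_cancel (by simp) (by finiteness)]
  bounded := by
    obtain ⟨D, hD, hgD⟩ := hg.bounded
    refine ⟨(1 + θ : ℝ≥0∞)⁻¹ * (C + θ * D),
      ENNReal.mul_ne_top (ENNReal.inv_ne_top.2 (by simp)) (by finiteness), fun x => ?_⟩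
    rw [SeqTest.smoothed]
    gcongr
    exacts [hpC x, hgD x]

lemma exists_isBoundedPosDensity_le [MeasurableSpace α] (ν : Measure α) [SigmaFinite ν] [NeZero ν]
    {K : Set α} (hK : MeasurableSet K) (hνK : ν K ≠ ∞) :
    ∃ g, IsBoundedPosDensity ν g ∧ ∃ c : ℝ≥0, 0 < c ∧ ∀ x ∈ K, c ≤ g x := by
  obtain ⟨h, hpos, hmeas, hint⟩ := exists_pos_lintegral_lt_of_sigmaFinite ν one_ne_zero
  let u : α → ℝ≥0∞ := fun x => min 1 (h x : ℝ≥0∞) + K.indicator 1 x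
  have hu : Measurable u :=
    (measurable_const.min hmeas.coe_nnreal_ennreal).add (measurable_one.indicator hK)
  have hu0 : ∀ x, u x ≠ 0 := fun x => by simp [u, (hpos x).ne']
  have hmass0 : ∫⁻ x, u x ∂ν ≠ 0 := fun hzero => NeZero.ne ν <| ae_eq_bot.1 <|
    eventually_false_iff_eq_bot.1 <| ((lintegral_eq_zero_iff hu).1 hzero).mono hu0
  have hmass : ∫⁻ x, u x ∂ν ≠ ∞ := by
    simp only [u]
    rw [lintegral_add_right _ (measurable_one.indicator hK), lintegral_indicator_one hK]
    exact ENNReal.add_ne_top.2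
      ⟨((lintegral_mono fun x => min_le_right _ _).trans_lt (hint.trans ENNReal.one_lt_top)).ne,
        hνK⟩
  have hinv : (∫⁻ x, u x ∂ν)⁻¹ ≠ ∞ := ENNReal.inv_ne_top.2 hmass0
  refine ⟨fun x => (∫⁻ x, u x ∂ν)⁻¹ * u x, ⟨hu.const_mul _, fun x =>
    mul_ne_zero (ENNReal.inv_ne_zero.2 hmass) (hu0 x), ?_, (∫⁻ x, u x ∂ν)⁻¹ * 2, ?_, fun x => ?_⟩,
    (∫⁻ x, u x ∂ν)⁻¹.toNNReal, ENNReal.toNNReal_pos (ENNReal.inv_ne_zero.2 hmass) hinv,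
    fun x hx => ?_⟩
  · rw [lintegral_const_mul _ hu, ENNReal.inv_mul_cancel hmass0 hmass]
  · exact ENNReal.mul_ne_top hinv ENNReal.ofNat_ne_top
  · gcongr
    rw [← one_add_one_eq_two]
    exact add_le_add (min_le_left _ _) (Set.indicator_le_self' (fun _ _ => zero_le) x)
  · rw [ENNReal.coe_toNNReal hinv]
    exact le_mul_of_one_le_right' (by simp [u, hx])

variable [TopologicalSpace α] {K : Set α}

/-- The extension by zero of a nonnegative continuous function on `K`. -/
def zeroExtend (f : C(K, ℝ≥0)) : α → ℝ≥0∞ :=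
  Function.extend Subtype.val (fun x => (f x : ℝ≥0∞)) 0

lemma zeroExtend_of_mem (f : C(K, ℝ≥0)) {x : α} (hx : x ∈ K) : zeroExtend f x = f ⟨x, hx⟩ :=
  Subtype.val_injective.extend_apply _ _ (⟨x, hx⟩ : K)

lemma zeroExtend_of_notMem (f : C(K, ℝ≥0)) {x : α} (hx : x ∉ K) : zeroExtend f x = 0 :=
  Function.extend_apply' _ _ _ fun ⟨y, hy⟩ => hx (hy ▸ y.2)

lemma measurable_zeroExtend [MeasurableSpace α] [OpensMeasurableSpace α] (hK : MeasurableSet K)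
    (f : C(K, ℝ≥0)) : Measurable (zeroExtend f) :=
  (MeasurableEmbedding.subtype_coe hK).measurable_extend
    f.continuous.measurable.coe_nnreal_ennreal measurable_zero

lemma zeroExtend_le_add_nndist [CompactSpace K] (f f' : C(K, ℝ≥0)) {x : α} (hx : x ∈ K) :
    zeroExtend f x ≤ zeroExtend f' x + nndist f f' := by
  rw [zeroExtend_of_mem f hx, zeroExtend_of_mem f' hx]
  have hdist : nndist (f ⟨x, hx⟩) (f' ⟨x, hx⟩) ≤ nndist f f' := f.dist_apply_le_dist ⟨x, hx⟩
  have hle : f ⟨x, hx⟩ ≤ f' ⟨x, hx⟩ + nndist f f' :=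
    (NNReal.le_add_nndist _ _).trans (by gcongr)
  exact_mod_cast hle

lemma exists_zeroExtend_le [CompactSpace K] (f : C(K, ℝ≥0)) :
    ∃ C : ℝ≥0∞, C ≠ ∞ ∧ ∀ x, zeroExtend f x ≤ C := by
  refine ⟨nndist f 0, ENNReal.coe_ne_top, fun x => ?_⟩
  by_cases hx : x ∈ K
  · simpa [zeroExtend_of_mem 0 hx] using zeroExtend_le_add_nndist f 0 hx
  · simp [zeroExtend_of_notMem f hx]

lemma exists_countable_dominating [T2Space α] [SecondCountableTopology α] [MeasurableSpace α]
    [OpensMeasurableSpace α] (ν : Measure α) [SigmaFinite ν] [NeZero ν]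
    [IsFiniteMeasureOnCompacts ν] (hK : IsCompact K) :
    ∃ Q : Set (α → ℝ≥0∞), Q.Countable ∧ Q.Nonempty ∧ (∀ q ∈ Q, IsBoundedPosDensity ν q) ∧
      ∀ f : C(K, ℝ≥0), ∫⁻ x, zeroExtend f x ∂ν = 1 →
        ∀ r : ℝ≥0, 1 < r → ∃ q ∈ Q, ∀ x, zeroExtend f x ≤ r * q x := by
  have : CompactSpace K := isCompact_iff_compactSpace.1 hK
  obtain ⟨g, hg, c, hc, hgc⟩ :=
    exists_isBoundedPosDensity_le ν hK.measurableSet hK.measure_ne_top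
  let S : Set C(K, ℝ≥0) := {f | ∫⁻ x, zeroExtend f x ∂ν = 1}
  obtain ⟨D, hDS, hD, hSD⟩ :=
    (TopologicalSpace.IsSeparable.of_separableSpace S).exists_countable_dense_subset
  let θ : ℕ → ℝ≥0 := fun n => 1 / (n + 1)
  have hθ : ∀ n, 0 < θ n := fun n => by positivity
  refine ⟨insert g (Set.image2 (fun f n => smoothed g (θ n) (zeroExtend f)) D Set.univ),
    (hD.image2 Set.countable_univ _).insert _, Set.insert_nonempty _ _, ?_, fun f hf r hr => ?_⟩
  · rintro q (rfl | ⟨f, hf, n, -, rfl⟩)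
    · exact hg
    · obtain ⟨C, hC, hfC⟩ := exists_zeroExtend_le f
      exact hg.smoothed (hθ n).ne' (measurable_zeroExtend hK.measurableSet f) (hDS hf) hC hfC
  · obtain ⟨n, hn⟩ := exists_nat_one_div_lt (tsub_pos_of_lt hr)
    obtain ⟨f', hf', hdist⟩ := Metric.mem_closure_iff.1 (hSD hf) (θ n * c)
      (by exact_mod_cast mul_pos (hθ n) hc)
    refine ⟨_, Set.mem_insert_of_mem _ ⟨f', hf', n, trivial, rfl⟩,
      fun x => le_mul_smoothed (lt_tsub_iff_left.1 hn).le ?_⟩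
    by_cases hx : x ∈ K
    · have hnndist : nndist f f' ≤ θ n * c := by exact_mod_cast hdist.le
      calc zeroExtend f x ≤ zeroExtend f' x + nndist f f' := zeroExtend_le_add_nndist f f' hx
        _ ≤ zeroExtend f' x + θ n * c := by gcongr; exact_mod_cast hnndist
        _ ≤ zeroExtend f' x + θ n * g x := by gcongr; exact hgc x hx
    · simp [zeroExtend_of_notMem f hx]

end ContinuousDensities

/-- The class of laws whose density vanishes outside `K` and is continuous on `K`, that is, extends
by zero a continuous function on `K`. -/
def continuousDensityLaws (K : Set (RV d)) : Set (Measure (RV d)) :=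
  {P | IsProbabilityMeasure P ∧ ∃ f : C(K, NNReal), P = volume.withDensity (zeroExtend f)}

variable {d} in
lemma continuousOn_of_abs_sub_le_sqrt {p : RV d → ℝ} {K : Set (RV d)}
    (h : ∀ x ∈ K, ∀ y ∈ K, |p x - p y| ≤ Real.sqrt (∑ i, (x i - y i) ^ 2)) :
    ContinuousOn p K := by
  intro x hx
  rw [ContinuousWithinAt, tendsto_iff_dist_tendsto_zero]
  have hlim : Tendsto (fun y : RV d => Real.sqrt (∑ i, (y i - x i) ^ 2)) (nhdsWithin x K)
      (nhds 0) := by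
    have hcont : Continuous fun y : RV d => Real.sqrt (∑ i, (y i - x i) ^ 2) := by fun_prop
    simpa using (hcont.continuousWithinAt (s := K) (x := x)).tendsto
  refine squeeze_zero' (Eventually.of_forall fun _ => dist_nonneg) ?_ hlim
  filter_upwards [self_mem_nhdsWithin] with y hy
  exact h y hy x hx

lemma DBoxLip_subset_continuousDensityLaws (B : ℝ) :
    DBoxLip d B ⊆ continuousDensityLaws d (Set.Icc (-1) 1) := by
  rintro P ⟨hPprob, p, -, hP, hp0, -, hlip⟩
  have hbox : ∀ {x : RV d}, x ∈ Set.Icc (-1 : RV d) 1 ↔ ∀ i, |x i| ≤ 1 := by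
    simp [Pi.le_def, abs_le, forall_and]
  have hcont : ContinuousOn p (Set.Icc (-1) 1) := continuousOn_of_abs_sub_le_sqrt
    fun x hx y hy => hlip x y (hbox.1 hx) (hbox.1 hy)
  refine ⟨hPprob, ⟨fun x => (p x).toNNReal, continuous_real_toNNReal.comp hcont.domRestrict⟩, ?_⟩
  rw [hP]
  congr 1 with x
  by_cases hx : x ∈ Set.Icc (-1 : RV d) 1
  · rw [zeroExtend_of_mem _ hx]
    rfl
  · rw [zeroExtend_of_notMem _ hx, hp0 x (hx ∘ hbox.2), ENNReal.ofReal_zero]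

lemma limsup_div_mul_const_le {r : ℕ → ℝ} (h : Tendsto (fun t : ℕ => r t / t) atTop (nhds 0))
    (s : ℝ) {c : ℝ} (hc : 0 ≤ c) : limsup (fun t : ℕ => r t / (t * s)) atTop ≤ c := by
  have hdiv : Tendsto (fun t : ℕ => r t / (t * s)) atTop (nhds 0) := by
    simpa only [div_div, zero_div] using h.div_const s
  exact hdiv.limsup_eq.trans_le hc

theorem statement19_general {K : Set (RV d)} (hK : IsCompact K) :
    ∃ E : (t : ℕ) → (Fin t → RV d) → RV d → ℝ, IsEstimatorSeq d E ∧
      ∀ P ∈ continuousDensityLaws d K, ∀ μ : Measure (Seq d), IsIIDLaw d μ P →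
        ∀ᵐ ω ∂μ, Tendsto (fun t : ℕ => regret d P E t ω / t) atTop (nhds 0) := by
  obtain ⟨Q, hQ, hne, hdens, hdom⟩ := exists_countable_dominating (volume : Measure (RV d)) hK
  obtain ⟨E, hE, hreg⟩ := exists_isEstimatorSeq_of_countable hQ hne hdens
  refine ⟨E, hE, ?_⟩
  rintro _ ⟨hprob, f, rfl⟩ μ hμ
  have hint : ∫⁻ x, zeroExtend f x = 1 := by
    rw [← setLIntegral_univ, ← withDensity_apply _ MeasurableSet.univ, measure_univ]
  exact hreg _ (measurable_zeroExtend hK.measurableSet f) (hdom f hint) hprob μ hμ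

/-- For the box–Lipschitz–bounded class there is an estimator sequence with
a.s. sublinear prediction regret; consequently the class is well estimable at every level
`c > 0` relative to the log-concave KL-projection. -/
theorem statement19 (hd : 0 < d) (B : ℝ) (hB : 1 < B) :
    ∃ E : (t : ℕ) → (Fin t → RV d) → RV d → ℝ, IsEstimatorSeq d E ∧
      ∀ P ∈ DBoxLip d B, ∀ μ : Measure (Seq d), IsIIDLaw d μ P →
        (∀ᵐ ω ∂μ, Tendsto (fun t : ℕ => regret d P E t ω / t) atTop (nhds 0)) ∧
        (∀ c : ℝ, 0 < c → P ∉ logConcaveLaws d →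
          ∀ L ∈ logConcaveLaws d, (∀ L' ∈ logConcaveLaws d, klDivR P L ≤ klDivR P L') →
            ∀ᵐ ω ∂μ, Filter.limsup
              (fun t : ℕ => regret d P E t ω / (t * hellinger d P L ^ 2)) atTop ≤ c) := by
  obtain ⟨E, hE, hreg⟩ := statement19_general d isCompact_Icc
  refine ⟨E, hE, fun P hP μ hμ => ?_⟩
  have hP := hreg P (DBoxLip_subset_continuousDensityLaws d B hP) μ hμ
  exact ⟨hP, fun c hc _ L _ _ => hP.mono fun ω hω => limsup_div_mul_const_le hω _ hc.le⟩

end SeqTest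
end
end
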